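/- arXiv:2508.09082 — 5 statements merged into one kernel-verified Lean document; each statement's English description precedes it below -/
import Mathlib

section
/- Let d ≥ 4 be an even integer, n = d²/2, and in R = 𝔽₂[x]/(xⁿ−1) set a = 1 + x and b = (1+x)·P_{d+1}(x) (so that b = 1 + x^{d+1} and wt(a) + wt(b) = 4, i.e., every stabilizer generator has weight 4). Then dim_{𝔽₂} C₁(a,b) − dim_{𝔽₂} C₂(a,b) = 2 and d_GB(a,b) = d; that is, the GB code of (a,b) is a [[d², 2, d]] quantum code, and for d ≥ 6 it is degenerate since its stabilizer generators have weight 4 < d. -/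
open Polynomial

noncomputable section

/-- `R2 n` is the ring `𝔽₂[x]/(xⁿ − 1)`. -/
abbrev R2 (n : ℕ) : Type := AdjoinRoot (X ^ n - 1 : (ZMod 2)[X])

/-- The image of `x` in `𝔽₂[x]/(xⁿ − 1)`. -/
def xR (n : ℕ) : R2 n := AdjoinRoot.root _

/-- The quotient map `𝔽₂[x] → 𝔽₂[x]/(xⁿ − 1)`. -/
def mkR (n : ℕ) : (ZMod 2)[X] →+* R2 n := AdjoinRoot.mk _

lemma xR_pow_n (n : ℕ) : xR n ^ n = 1 := by
  have h : (AdjoinRoot.mk (X ^ n - 1 : (ZMod 2)[X])) (X ^ n - 1) = 0 := AdjoinRoot.mk_self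
  rw [map_sub, map_pow, AdjoinRoot.mk_X, map_one, sub_eq_zero] at h
  exact h

/-- The unique representative of degree `< n` of an element of `𝔽₂[x]/(xⁿ − 1)` (junk if `n = 0`). -/
def repP {n : ℕ} (u : R2 n) : (ZMod 2)[X] :=
  if h : n = 0 then 0
  else AdjoinRoot.modByMonicHom (by simpa using monic_X_pow_sub_C (1 : ZMod 2) h) u

/-- The Hamming weight of an element of `𝔽₂[x]/(xⁿ − 1)`: the number of nonzero coefficients
of its degree-`< n` representative. -/
def wt {n : ℕ} (u : R2 n) : ℕ := (repP u).support.card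

/-- Coefficient of the degree-`< n` representative, indexed by `ℤ/n`. -/
def coeffZ {n : ℕ} (u : R2 n) (i : ZMod n) : ZMod 2 := (repP u).coeff i.val

/-- The X-stabilizer space `C₂(a,b) = {(r·a, r·b) : r ∈ R}` of the GB code of `(a,b)`. -/
def C2set (n : ℕ) (a b : R2 n) : Set (R2 n × R2 n) := {p | ∃ r : R2 n, p = (r * a, r * b)}

/-- The space `C₁(a,b) = {(u,v) : u·b + v·a = 0}` of the GB code of `(a,b)`. -/
def C1set (n : ℕ) (a b : R2 n) : Set (R2 n × R2 n) := {p | p.1 * b + p.2 * a = 0}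

/-- The (X-side) minimum distance of the GB code of `(a,b)`. -/
def dGB (n : ℕ) (a b : R2 n) : ℕ :=
  sInf {k | ∃ p ∈ C1set n a b \ C2set n a b, wt p.1 + wt p.2 = k}

/-- `P_m(x) = 1 + x + ⋯ + x^{m−1}` as a polynomial over `𝔽₂`. -/
def PmP (m : ℕ) : (ZMod 2)[X] := ∑ i ∈ Finset.range m, X ^ i

/-- `P_m(x) = 1 + x + ⋯ + x^{m−1}` as an element of `𝔽₂[x]/(xⁿ − 1)`. -/
def PmR (n m : ℕ) : R2 n := ∑ i ∈ Finset.range m, xR n ^ i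

/-- The ring endomorphism of `𝔽₂[x]/(xⁿ − 1)` induced by `x ↦ x^d`. -/
def substHom (n d : ℕ) : R2 n →+* R2 n :=
  AdjoinRoot.lift (algebraMap (ZMod 2) (R2 n)) (xR n ^ d) (by
    simp only [eval₂_sub, eval₂_X_pow, eval₂_one]
    rw [← pow_mul, mul_comm d n, pow_mul, xR_pow_n, one_pow, sub_self])

/-- The Euclidean inner product on `𝔽₂²ⁿ`, in terms of pairs `(u₁, u₂)` of elements of
`𝔽₂[x]/(xⁿ − 1)` (representing the concatenated binary vector `(u₁ | u₂)`). -/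
def eucInner (n : ℕ) (p q : R2 n × R2 n) : ZMod 2 :=
  ∑ i ∈ Finset.range n,
    ((repP p.1).coeff i * (repP q.1).coeff i + (repP p.2).coeff i * (repP q.2).coeff i)

/-- The symplectic inner product of `u₁ + w·u₂` and `v₁ + w·v₂`, i.e.
`Σᵢ (u₁ᵢ·v₂ᵢ + u₂ᵢ·v₁ᵢ)`, in terms of the pairs `(u₁,u₂)`, `(v₁,v₂)`. -/
def sympInner (n : ℕ) (p q : R2 n × R2 n) : ZMod 2 :=
  ∑ i ∈ Finset.range n,
    ((repP p.1).coeff i * (repP q.2).coeff i + (repP p.2).coeff i * (repP q.1).coeff i)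

/-- Euclidean dual of a set of (pairs representing) binary vectors of length `2n`. -/
def eucDual (n : ℕ) (S : Set (R2 n × R2 n)) : Set (R2 n × R2 n) :=
  {p | ∀ q ∈ S, eucInner n q p = 0}

/-- Symplectic dual of a set of (pairs representing) vectors of `𝔽₄ⁿ`. -/
def sympDual (n : ℕ) (S : Set (R2 n × R2 n)) : Set (R2 n × R2 n) :=
  {p | ∀ q ∈ S, sympInner n q p = 0}

/-- Number of nonzero `𝔽₄`-coordinates of `u₁ + w·u₂`, in terms of the pair `(u₁,u₂)`. -/
def wt4 (n : ℕ) (p : R2 n × R2 n) : ℕ := ((repP p.1).support ∪ (repP p.2).support).card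

/-- The `2n` binary coordinates of a pair `(u₁,u₂)`. -/
def coords {n : ℕ} (p : R2 n × R2 n) : (Fin n ⊕ Fin n) → ZMod 2 :=
  Sum.elim (fun i => (repP p.1).coeff i) (fun i => (repP p.2).coeff i)

/-- Vertex set of the Tanner graph: check vertices `x_t` (left) and data vertices
`q_s`, `q'_s` (right). -/
def TV (n : ℕ) : Type := (ZMod n) ⊕ ((ZMod n) ⊕ (ZMod n))

/-- `trel a b v w` holds iff `v` is a check vertex `x_t`, `w` is a data vertex, and they are
connected: `x_t ~ q_s` iff `a_{s−t} = 1`, and `x_t ~ q'_s` iff `b_{s−t} = 1`. -/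
def trel {n : ℕ} (a b : R2 n) (v w : TV n) : Prop :=
  ∃ t s : ZMod n, v = Sum.inl t ∧
    ((w = Sum.inr (Sum.inl s) ∧ coeffZ a (s - t) = 1) ∨
     (w = Sum.inr (Sum.inr s) ∧ coeffZ b (s - t) = 1))

/-- The Tanner graph `T(a,b)` of the GB code of `(a,b)`. -/
def tanner (n : ℕ) (a b : R2 n) : SimpleGraph (TV n) where
  Adj v w := trel a b v w ∨ trel a b w v
  symm := ⟨fun v w h => Or.symm h⟩
  loopless := by
    constructor
    rintro v (⟨t, s, hv, hw⟩ | ⟨t, s, hv, hw⟩) <;>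
      rcases hw with ⟨hw, -⟩ | ⟨hw, -⟩ <;> (subst hv; simp at hw)

end

noncomputable section

/-! With `P = P_{d+1}` and `J = P_n` the all-ones word, `C₁` consists of the words
`(u, u * P + c • J)` with `c ∈ 𝔽₂`, and such a word lies in `C₂` exactly when `u` has even weight
and `c = 0`.

As for the toric code, the distance is governed by the lattice of pairs `(i, j)` with
`i + (d + 1) * j ≡ 0` modulo `n`. A lattice vector `(±s, t)` yields `k = P_t(x^{d+1})` and an `h` of
weight at most `s` with `h + k * P` a multiple of `J`. So `(k, h)` lies in `C₁`, which gives a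
codeword of weight at most `s + t`; and multiplying a codeword `(u, v)` by `(h, k)` shows that
`h * u + k * v` is a multiple of `J`, whence `n ≤ s * wt u + t * wt v` whenever that multiple is
nonzero. The vectors `(-d/2, d/2)`, `(1, d - 1)` and `(d/2 + 1, d/2 - 1)` detect all of
`C₁ \ C₂`. -/

namespace GBCode

variable {n : ℕ}

/-! ### Weights -/

section Weight

lemma repP_add (u v : R2 n) : repP (u + v) = repP u + repP v := by
  unfold repP
  split_ifs
  · rw [add_zero]
  · rw [map_add]

@[simp]
lemma wt_zero : wt (0 : R2 n) = 0 := by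
  unfold wt repP
  split_ifs <;> simp

lemma wt_add_le (u v : R2 n) : wt (u + v) ≤ wt u + wt v := by
  simpa only [wt, repP_add] using
    (Finset.card_le_card support_add).trans (Finset.card_union_le _ _)

lemma wt_sum_le {ι : Type*} (s : Finset ι) (f : ι → R2 n) :
    wt (∑ i ∈ s, f i) ≤ ∑ i ∈ s, wt (f i) :=
  Finset.le_sum_of_subadditive wt wt_zero.le wt_add_le s f

@[simp]
lemma mkR_X : mkR n X = xR n :=
  AdjoinRoot.mk_X

lemma mkR_surjective : Function.Surjective (mkR n) :=
  AdjoinRoot.mk_surjective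

lemma xR_pow_mod (k : ℕ) : xR n ^ (k % n) = xR n ^ k :=
  (pow_eq_pow_mod k (xR_pow_n n)).symm

lemma substHom_xR (e : ℕ) : substHom n e (xR n) = xR n ^ e :=
  AdjoinRoot.lift_root _

variable [NeZero n]

variable (n) in
lemma monic_X_pow_sub_one : (X ^ n - 1 : (ZMod 2)[X]).Monic :=
  monic_X_pow_sub_C 1 (NeZero.ne n)

lemma mkR_repP (u : R2 n) : mkR n (repP u) = u := by
  rw [repP, dif_neg (NeZero.ne n)]
  exact AdjoinRoot.mk_leftInverse (monic_X_pow_sub_one n) u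

lemma repP_mkR_of_degree_lt {p : (ZMod 2)[X]} (hp : p.degree < n) : repP (mkR n p) = p := by
  rw [repP, dif_neg (NeZero.ne n), mkR, AdjoinRoot.modByMonicHom_mk,
    modByMonic_eq_self_iff (monic_X_pow_sub_one n)]
  rwa [← C_1, degree_X_pow_sub_C (NeZero.pos n)]

lemma eq_sum_xR_pow (u : R2 n) : u = ∑ i ∈ (repP u).support, xR n ^ i := by
  conv_lhs => rw [← mkR_repP u, as_sum_support (repP u), map_sum]
  refine Finset.sum_congr rfl fun i hi => ?_
  have hne := mem_support_iff.1 hi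
  have hcoeff : (repP u).coeff i = 1 := Fin.eq_one_of_ne_zero _ hne
  rw [hcoeff, ← X_pow_eq_monomial (R := ZMod 2), map_pow, mkR_X]

lemma wt_sum_xR_pow {s : Finset ℕ} (hs : ∀ i ∈ s, i < n) :
    wt (∑ i ∈ s, xR n ^ i) = s.card := by
  have hdeg : (∑ i ∈ s, X ^ i : (ZMod 2)[X]).degree < n := by
    refine (degree_sum_le _ _).trans_lt ((Finset.sup_lt_iff (WithBot.bot_lt_coe n)).2 ?_)
    intro i hi
    rw [degree_X_pow]
    exact Nat.cast_lt.2 (hs i hi)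
  have hrep : repP (∑ i ∈ s, xR n ^ i) = ∑ i ∈ s, X ^ i := by
    simpa only [map_sum, map_pow, mkR_X] using repP_mkR_of_degree_lt hdeg
  rw [wt, hrep]
  congr 1
  ext i
  simp [coeff_X_pow]

lemma wt_xR_pow (k : ℕ) : wt (xR n ^ k) = 1 := by
  rw [← xR_pow_mod]
  simpa using wt_sum_xR_pow (s := {k % n}) (by simpa using Nat.mod_lt k (NeZero.pos n))

lemma wt_one_add_xR_pow {k : ℕ} (hk : k ≠ 0) (hkn : k < n) : wt (1 + xR n ^ k) = 2 := by
  have hsum := wt_sum_xR_pow (n := n) (s := {0, k}) (by simp [hkn, NeZero.pos n])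
  rwa [Finset.sum_pair hk.symm, Finset.card_pair hk.symm, pow_zero] at hsum

lemma wt_mul_le (u v : R2 n) : wt (u * v) ≤ wt u * wt v := by
  conv_lhs => rw [eq_sum_xR_pow u, eq_sum_xR_pow v, Finset.sum_mul_sum]
  calc
    _ ≤ ∑ i ∈ (repP u).support, ∑ j ∈ (repP v).support, wt (xR n ^ i * xR n ^ j) :=
      (wt_sum_le _ _).trans (Finset.sum_le_sum fun _ _ => wt_sum_le _ _)
    _ = wt u * wt v := by
      simp only [← pow_add, wt_xR_pow, Finset.sum_const, smul_eq_mul, mul_one]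
      rfl

lemma wt_substHom_le (e : ℕ) (u : R2 n) : wt (substHom n e u) ≤ wt u := by
  conv_lhs => rw [eq_sum_xR_pow u, map_sum]
  refine (wt_sum_le _ _).trans_eq ?_
  simp only [map_pow, substHom_xR, ← pow_mul, wt_xR_pow, Finset.sum_const, smul_eq_mul, mul_one]
  rfl

lemma wt_PmR_le (k : ℕ) : wt (PmR n k) ≤ k := by
  refine (wt_sum_le _ _).trans_eq ?_
  simp only [wt_xR_pow, Finset.sum_const, Finset.card_range, smul_eq_mul, mul_one]

variable (n) in
lemma wt_PmR_self : wt (PmR n n) = n := by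
  rw [PmR, wt_sum_xR_pow (by simp), Finset.card_range]

variable (n) in
lemma PmR_self_ne_zero : PmR n n ≠ 0 := fun h =>
  NeZero.ne n (by rw [← wt_PmR_self n, h, wt_zero])

end Weight

/-! ### Geometric sums and the augmentation -/

lemma PmR_add (k l : ℕ) : PmR n (k + l) = PmR n k + xR n ^ k * PmR n l := by
  simp only [PmR, Finset.sum_range_add, Finset.mul_sum, pow_add]

lemma substHom_PmR_mul_PmR (e t : ℕ) :
    substHom n e (PmR n t) * PmR n e = PmR n (e * t) := by
  induction t with
  | zero => simp [PmR]
  | succ t ih =>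
    have hsucc : PmR n (t + 1) = PmR n t + xR n ^ t := Finset.sum_range_succ _ _
    rw [hsucc, map_add, map_pow, substHom_xR, add_mul, ih, Nat.mul_succ, PmR_add, pow_mul]

lemma one_add_xR_eq_sub : 1 + xR n = xR n - 1 := by
  rw [ZModModule.sub_eq_add (xR n), add_comm]

lemma one_add_xR_mul_PmR (k : ℕ) : (1 + xR n) * PmR n k = 1 + xR n ^ k := by
  rw [one_add_xR_eq_sub, PmR, mul_geom_sum, ZModModule.sub_eq_add (xR n ^ k), add_comm]

lemma one_add_xR_mul_PmR_self : (1 + xR n) * PmR n n = 0 := by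
  rw [one_add_xR_mul_PmR, xR_pow_n, ZModModule.add_self]

variable (n) in
/-- The augmentation `𝔽₂[x]/(xⁿ − 1) → 𝔽₂`, `x ↦ 1`, i.e. the parity of the weight. -/
def aug : R2 n →ₐ[ZMod 2] ZMod 2 :=
  AdjoinRoot.liftAlgHom (X ^ n - 1) (AlgHom.id (ZMod 2) (ZMod 2)) 1 (by simp)

lemma aug_mkR (p : (ZMod 2)[X]) : aug n (mkR n p) = p.eval 1 := by
  rw [aug, mkR, AdjoinRoot.liftAlgHom_mk]
  rfl

@[simp]
lemma aug_xR : aug n (xR n) = 1 := by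
  rw [← mkR_X, aug_mkR, eval_X]

lemma aug_substHom_PmR (e t : ℕ) : aug n (substHom n e (PmR n t)) = t := by
  simp [PmR, substHom_xR]

lemma mkR_X_sub_C_one : mkR n (X - C 1) = 1 + xR n := by
  rw [map_sub, mkR_X, C_1, map_one, one_add_xR_eq_sub]

lemma aug_eq_zero_iff_dvd {u : R2 n} : aug n u = 0 ↔ 1 + xR n ∣ u := by
  constructor
  · obtain ⟨p, rfl⟩ := mkR_surjective u
    intro h
    rw [aug_mkR] at h
    rw [← mkR_X_sub_C_one]
    exact map_dvd _ (dvd_iff_isRoot.2 h)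
  · rintro ⟨r, rfl⟩
    rw [map_mul, map_add, map_one, aug_xR, ZModModule.add_self, zero_mul]

lemma mul_PmR_self (u : R2 n) : u * PmR n n = aug n u • PmR n n := by
  obtain ⟨r, hr⟩ : 1 + xR n ∣ u - algebraMap (ZMod 2) (R2 n) (aug n u) :=
    aug_eq_zero_iff_dvd.1 <| by
      rw [map_sub, AlgHom.commutes, Algebra.algebraMap_self_apply, sub_self]
  rw [Algebra.smul_def]
  linear_combination PmR n n * hr + r * one_add_xR_mul_PmR_self (n := n)

lemma PmR_mul_self (q : ℕ) : PmR n (q * n) = (q : ZMod 2) • PmR n n := by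
  rw [mul_comm, ← substHom_PmR_mul_PmR, mul_PmR_self, aug_substHom_PmR]

lemma one_add_xR_mul_eq_zero_iff {u : R2 n} :
    (1 + xR n) * u = 0 ↔ ∃ c : ZMod 2, u = c • PmR n n := by
  constructor
  · obtain ⟨p, rfl⟩ := mkR_surjective u
    intro h
    rw [← mkR_X_sub_C_one, ← map_mul, mkR, AdjoinRoot.mk_eq_zero, ← mul_geom_sum, ← C_1,
      mul_dvd_mul_iff_left (X_sub_C_ne_zero 1)] at h
    obtain ⟨q, rfl⟩ := h
    refine ⟨aug n (mkR n q), ?_⟩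
    rw [← mul_PmR_self, map_mul, mul_comm, map_sum]
    simp only [map_pow, mkR_X, PmR]
  · rintro ⟨c, rfl⟩
    rw [mul_smul_comm, one_add_xR_mul_PmR_self, smul_zero]

/-! ### The two code spaces -/

lemma mem_C1set_iff {p : R2 n × R2 n} {P : R2 n} :
    p ∈ C1set n (1 + xR n) ((1 + xR n) * P) ↔
      ∃ c : ZMod 2, p.2 = p.1 * P + c • PmR n n := by
  have hfactor : p.1 * ((1 + xR n) * P) + p.2 * (1 + xR n) = (1 + xR n) * (p.2 - p.1 * P) := by
    rw [ZModModule.sub_eq_add p.2]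
    ring
  simp only [C1set, Set.mem_ofPred_eq, hfactor, one_add_xR_mul_eq_zero_iff,
    sub_eq_iff_eq_add']

lemma mem_C2set_iff {p : R2 n × R2 n} {P : R2 n} :
    p ∈ C2set n (1 + xR n) ((1 + xR n) * P) ↔ aug n p.1 = 0 ∧ p.2 = p.1 * P := by
  obtain ⟨u, v⟩ := p
  simp only [C2set, Set.mem_ofPred_eq, Prod.mk.injEq]
  constructor
  · rintro ⟨r, rfl, rfl⟩
    exact ⟨aug_eq_zero_iff_dvd.2 (dvd_mul_left _ _), by ring⟩
  · rintro ⟨hu, rfl⟩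
    obtain ⟨r, rfl⟩ := aug_eq_zero_iff_dvd.1 hu
    exact ⟨r, by ring, by ring⟩

section Dimension

variable [NeZero n]

variable (n) in
lemma finrank_R2 : Module.finrank (ZMod 2) (R2 n) = n := by
  rw [(AdjoinRoot.powerBasis' (monic_X_pow_sub_one n)).finrank, AdjoinRoot.powerBasis'_dim,
    ← C_1, natDegree_X_pow_sub_C]

instance : Module.Finite (ZMod 2) (R2 n) :=
  (monic_X_pow_sub_one n).finite_adjoinRoot

lemma finrank_span_C1set (a P : R2 n) :
    Module.finrank (ZMod 2) ↥(Submodule.span (ZMod 2) (C1set n a (a * P))) =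
      n + Module.finrank (ZMod 2) ↥(LinearMap.mulRight (ZMod 2) a).ker := by
  let s : R2 n × R2 n →ₗ[ZMod 2] R2 n := (LinearMap.mulRight (ZMod 2) P).coprod LinearMap.id
  let f := LinearMap.mulRight (ZMod 2) a ∘ₗ s
  have hs : s.range = ⊤ := LinearMap.range_eq_top.2 fun v => ⟨(0, v), by simp [s]⟩
  have hC1 : C1set n a (a * P) = (f.ker : Set (R2 n × R2 n)) := by
    ext p
    have hf : f p = p.1 * (a * P) + p.2 * a := by
      simp only [f, s, LinearMap.comp_apply, LinearMap.coprod_apply, LinearMap.mulRight_apply,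
        LinearMap.id_apply]
      ring
    simp only [C1set, Set.mem_ofPred_eq, SetLike.mem_coe, LinearMap.mem_ker, hf]
  have hrange : f.range = (LinearMap.mulRight (ZMod 2) a).range :=
    LinearMap.range_comp_of_range_eq_top _ hs
  have hf := f.finrank_range_add_finrank_ker
  have ha := (LinearMap.mulRight (ZMod 2) a).finrank_range_add_finrank_ker
  rw [hrange, Module.finrank_prod, finrank_R2] at hf
  rw [finrank_R2] at ha
  rw [hC1, Submodule.span_eq]
  omega

lemma finrank_span_C2set_add (a P : R2 n) :
    Module.finrank (ZMod 2) ↥(Submodule.span (ZMod 2) (C2set n a (a * P))) +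
      Module.finrank (ZMod 2) ↥(LinearMap.mulRight (ZMod 2) a).ker = n := by
  let i : R2 n →ₗ[ZMod 2] R2 n × R2 n := LinearMap.id.prod (LinearMap.mulRight (ZMod 2) P)
  let g := i ∘ₗ LinearMap.mulRight (ZMod 2) a
  have hi : i.ker = ⊥ := by
    rw [LinearMap.ker_prod, LinearMap.ker_id, bot_inf_eq]
  have hC2 : C2set n a (a * P) = (g.range : Set (R2 n × R2 n)) := by
    ext p
    have hg : ∀ r, g r = (r * a, r * (a * P)) := fun r => Prod.ext rfl (mul_assoc r a P)
    simp only [C2set, Set.mem_ofPred_eq, SetLike.mem_coe, LinearMap.mem_range, hg, eq_comm]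
  have hker : g.ker = (LinearMap.mulRight (ZMod 2) a).ker :=
    LinearMap.ker_comp_of_ker_eq_bot _ hi
  rw [hC2, Submodule.span_eq, ← hker, g.finrank_range_add_finrank_ker, finrank_R2]

lemma finrank_span_C1set_sub_finrank_span_C2set (a P : R2 n) :
    Module.finrank (ZMod 2) ↥(Submodule.span (ZMod 2) (C1set n a (a * P))) -
        Module.finrank (ZMod 2) ↥(Submodule.span (ZMod 2) (C2set n a (a * P))) =
      2 * Module.finrank (ZMod 2) ↥(LinearMap.mulRight (ZMod 2) a).ker := by
  have h1 := finrank_span_C1set a P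
  have h2 := finrank_span_C2set_add a P
  omega

variable (n) in
lemma finrank_ker_mulRight_one_add_xR :
    Module.finrank (ZMod 2) ↥(LinearMap.mulRight (ZMod 2) (1 + xR n)).ker = 1 := by
  have hker : (LinearMap.mulRight (ZMod 2) (1 + xR n)).ker =
      Submodule.span (ZMod 2) {PmR n n} := by
    ext u
    simp only [LinearMap.mem_ker, LinearMap.mulRight_apply, mul_comm u,
      one_add_xR_mul_eq_zero_iff, Submodule.mem_span_singleton, eq_comm (a := u)]
  rw [hker, finrank_span_singleton (PmR_self_ne_zero n)]

end Dimension

/-! ### Minimum distance -/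

lemma mul_add_mul_eq_smul {h k u P : R2 n} {q : ZMod 2} (c : ZMod 2)
    (hhk : h + k * P = q • PmR n n) :
    h * u + k * (u * P + c • PmR n n) = (q * aug n u + c * aug n k) • PmR n n := by
  calc
    _ = u * (h + k * P) + c • (k * PmR n n) := by
      rw [mul_add k, mul_smul_comm]
      ring
    _ = _ := by
      rw [hhk, mul_smul_comm, mul_PmR_self, mul_PmR_self, smul_smul, smul_smul, ← add_smul]

section Distance

variable [NeZero n]

lemma le_wt_mul_wt_add_wt_mul_wt {h k u P : R2 n} {q c : ZMod 2}
    (hhk : h + k * P = q • PmR n n) (hodd : q * aug n u + c * aug n k = 1) :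
    n ≤ wt h * wt u + wt k * wt (u * P + c • PmR n n) := by
  calc
    n = wt (h * u + k * (u * P + c • PmR n n)) := by
      rw [mul_add_mul_eq_smul c hhk, hodd, one_smul, wt_PmR_self]
    _ ≤ _ := (wt_add_le _ _).trans (add_le_add (wt_mul_le _ _) (wt_mul_le _ _))

-- `P_t(x^e) * P_e` is `P_{et}`, and `P_s`, suitably shifted, extends or shortens it to `P_{qn}`.
lemma exists_add_substHom_PmR_mul_PmR_eq_smul {s t e q : ℕ}
    (hst : s + e * t = q * n ∨ e * t = q * n + s) :
    ∃ h : R2 n, wt h ≤ s ∧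
      h + substHom n e (PmR n t) * PmR n e = (q : ZMod 2) • PmR n n := by
  rcases hst with hst | hst
  · refine ⟨xR n ^ (e * t) * PmR n s, (wt_mul_le _ _).trans ?_, ?_⟩
    · simpa only [wt_xR_pow, one_mul] using wt_PmR_le s
    · rw [substHom_PmR_mul_PmR, add_comm, ← PmR_add, add_comm, hst, PmR_mul_self]
  · refine ⟨PmR n s, wt_PmR_le s, ?_⟩
    rw [substHom_PmR_mul_PmR, hst, PmR_add, PmR_mul_self, mul_comm q, pow_mul, xR_pow_n, one_pow,
      one_mul, add_left_comm, ZModModule.add_self, add_zero]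

lemma wt_substHom_PmR_le (e t : ℕ) : wt (substHom n e (PmR n t)) ≤ t :=
  (wt_substHom_le e _).trans (wt_PmR_le t)

lemma le_mul_wt_add_mul_wt {s t e q : ℕ} (hst : s + e * t = q * n ∨ e * t = q * n + s)
    {u : R2 n} {c : ZMod 2} (hodd : q * aug n u + c * t = 1) :
    n ≤ s * wt u + t * wt (u * PmR n e + c • PmR n n) := by
  obtain ⟨h, hs, hhk⟩ := exists_add_substHom_PmR_mul_PmR_eq_smul hst
  calc
    n ≤ wt h * wt u + wt (substHom n e (PmR n t)) * wt (u * PmR n e + c • PmR n n) :=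
      le_wt_mul_wt_add_wt_mul_wt hhk (by rwa [aug_substHom_PmR])
    _ ≤ _ := by
      gcongr
      exact wt_substHom_PmR_le e t

lemma exists_mem_C1set_diff_C2set_wt_le {s t e q : ℕ}
    (hst : s + e * t = q * n ∨ e * t = q * n + s) (ht : Odd t) :
    ∃ p ∈ C1set n (1 + xR n) ((1 + xR n) * PmR n e) \
        C2set n (1 + xR n) ((1 + xR n) * PmR n e), wt p.1 + wt p.2 ≤ s + t := by
  obtain ⟨h, hs, hhk⟩ := exists_add_substHom_PmR_mul_PmR_eq_smul hst
  refine ⟨(substHom n e (PmR n t), h), ⟨mem_C1set_iff.2 ⟨q, ?_⟩, fun hC2 => ?_⟩, ?_⟩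
  · rw [← hhk, add_left_comm, ZModModule.add_self, add_zero]
  · have haug := (mem_C2set_iff.1 hC2).1
    rw [aug_substHom_PmR] at haug
    exact ZMod.natCast_ne_zero_iff_odd.2 ht haug
  · rw [add_comm]
    exact add_le_add hs (wt_substHom_PmR_le e t)

end Distance

lemma two_mul_le_wt_add_wt {m : ℕ} (hm : m ≠ 0) (hn : n = 2 * m * m) {u : R2 n} {c : ZMod 2}
    (hne : ¬(aug n u = 0 ∧ c = 0)) :
    2 * m ≤ wt u + wt (u * PmR n (2 * m + 1) + c • PmR n n) := by
  have : NeZero n := ⟨by rw [hn]; positivity⟩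
  obtain ⟨l, rfl⟩ := Nat.exists_eq_add_one_of_ne_zero hm
  by_cases hodd : aug n u + c * (l + 1) = 1
  · have hle := le_mul_wt_add_mul_wt (n := n) (s := l + 1) (t := l + 1) (e := 2 * (l + 1) + 1)
      (q := 1) (.inr (by rw [hn]; ring)) (by simpa using hodd)
    refine Nat.le_of_mul_le_mul_left (?_ : (l + 1) * _ ≤ (l + 1) * _) l.succ_pos
    linarith
  · obtain ⟨rfl, hodd'⟩ : c = 1 ∧ aug n u + l = 1 := by
      generalize aug n u = y at *
      generalize (l : ZMod 2) = z at *
      revert c y z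
      decide
    -- Weighting the two bounds by `1` and `l` gives `wt u` and `wt v` the same coefficient.
    have hle₁ := le_mul_wt_add_mul_wt (n := n) (s := 1) (t := 2 * l + 1) (e := 2 * (l + 1) + 1)
      (q := 2) (.inl (by rw [hn]; ring)) (u := u) (c := 1) (by simp [CharTwo.two_eq_zero])
    have hle₂ := le_mul_wt_add_mul_wt (n := n) (s := l + 2) (t := l) (e := 2 * (l + 1) + 1)
      (q := 1) (.inl (by rw [hn]; ring)) (u := u) (c := 1) (by simpa using hodd')
    refine Nat.le_of_mul_le_mul_left (?_ : (l + 1) ^ 2 * _ ≤ (l + 1) ^ 2 * _) (by positivity)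
    calc
      (l + 1) ^ 2 * (2 * (l + 1)) = n + l * n := by
        rw [hn]
        ring
      _ ≤ _ := add_le_add hle₁ (Nat.mul_le_mul_left l hle₂)
      _ = (l + 1) ^ 2 * _ := by ring

lemma dGB_eq_of_exists_of_forall {a b : R2 n} {d : ℕ}
    (hex : ∃ p ∈ C1set n a b \ C2set n a b, wt p.1 + wt p.2 ≤ d)
    (hle : ∀ p ∈ C1set n a b \ C2set n a b, d ≤ wt p.1 + wt p.2) : dGB n a b = d := by
  obtain ⟨p, hp, hwt⟩ := hex
  refine IsLeast.csInf_eq ⟨⟨p, hp, hwt.antisymm (hle p hp)⟩, ?_⟩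
  rintro _ ⟨r, hr, rfl⟩
  exact hle r hr

lemma dGB_one_add_xR_mul_PmR {m : ℕ} (hm : m ≠ 0) (hn : n = 2 * m * m) :
    dGB n (1 + xR n) ((1 + xR n) * PmR n (2 * m + 1)) = 2 * m := by
  have : NeZero n := ⟨by rw [hn]; positivity⟩
  refine dGB_eq_of_exists_of_forall ?_ ?_
  · obtain ⟨l, rfl⟩ := Nat.exists_eq_add_one_of_ne_zero hm
    obtain ⟨p, hp, hwt⟩ := exists_mem_C1set_diff_C2set_wt_le (n := n) (s := 1) (t := 2 * l + 1)
      (e := 2 * (l + 1) + 1) (q := 2) (.inl (by rw [hn]; ring)) (odd_two_mul_add_one l)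
    exact ⟨p, hp, hwt.trans (by omega)⟩
  · rintro ⟨u, v⟩ ⟨hC1, hC2⟩
    obtain ⟨c, rfl : v = u * _ + _⟩ := mem_C1set_iff.1 hC1
    refine two_mul_le_wt_add_wt hm hn fun hzero => hC2 (mem_C2set_iff.2 ⟨hzero.1, ?_⟩)
    rw [hzero.2, zero_smul, add_zero]

lemma wt_one_add_xR_add_wt {k : ℕ} (hk : k ≠ 0) (hkn : k < n) :
    wt (1 + xR n) + wt ((1 + xR n) * PmR n k) = 4 := by
  have : NeZero n := ⟨by omega⟩
  have ha := wt_one_add_xR_pow (n := n) one_ne_zero (by omega)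
  rw [pow_one] at ha
  rw [one_add_xR_mul_PmR, ha, wt_one_add_xR_pow hk hkn]

end GBCode

open GBCode

/-- For even `d ≥ 4`, `2n = d²`, `a = 1 + x`, and
`b = (1+x)·P_{d+1}(x)` in `R = 𝔽₂[x]/(xⁿ−1)`: `b = 1 + x^{d+1}`, the stabilizer
generators have weight `wt(a) + wt(b) = 4`, `dim C₁(a,b) − dim C₂(a,b) = 2`, and
`d_GB(a,b) = d`; i.e. the GB code of `(a,b)` is a `[[d², 2, d]]` quantum code, which for
`d ≥ 6` is degenerate (it has a nonzero stabilizer of weight `4 < d`). -/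
theorem stmt_13 (d n : ℕ) (hd : Even d) (hd4 : 4 ≤ d) (hn : 2 * n = d ^ 2)
    (a b : R2 n) (ha : a = 1 + xR n) (hb : b = (1 + xR n) * PmR n (d + 1)) :
    b = 1 + xR n ^ (d + 1) ∧
    wt a + wt b = 4 ∧
    Module.finrank (ZMod 2) ↥(Submodule.span (ZMod 2) (C1set n a b)) -
        Module.finrank (ZMod 2) ↥(Submodule.span (ZMod 2) (C2set n a b)) = 2 ∧
    dGB n a b = d ∧
    (6 ≤ d → ∃ p ∈ C2set n a b, p ≠ 0 ∧ wt p.1 + wt p.2 < dGB n a b) := by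
  obtain ⟨m, rfl⟩ := hd.exists_two_nsmul
  rw [nsmul_eq_mul, Nat.cast_two] at *
  subst ha hb
  have hnm : n = 2 * m * m := by linarith
  have hm : m ≠ 0 := by omega
  have hkn : 2 * m + 1 < n := by nlinarith
  have : NeZero n := ⟨by omega⟩
  have hwt := wt_one_add_xR_add_wt (by omega) hkn
  have hdist := dGB_one_add_xR_mul_PmR hm hnm
  refine ⟨one_add_xR_mul_PmR _, hwt, ?_, hdist, fun hd6 => ?_⟩
  · rw [finrank_span_C1set_sub_finrank_span_C2set, finrank_ker_mulRight_one_add_xR]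
  · refine ⟨(1 + xR n, (1 + xR n) * PmR n (2 * m + 1)), ⟨1, by simp only [one_mul]⟩, ?_, ?_⟩
    · intro hzero
      simp [Prod.mk_eq_zero.1 hzero] at hwt
    · rw [hwt, hdist]
      omega

end
end

section
/- Let d ≥ 4 be even, n = d²/2, and in R = 𝔽₂[x]/(xⁿ−1) set a = 1+x and b = (1+x)·P_{d+1}(x). Then for all j, u, v ∈ R: if (u + j·(1+x), v) ∈ C₁(a,b) \ C₂(a,b), then wt(j) + wt(u) + wt(v) ≥ d. (Hence under the RL syndrome-extraction pattern, whose check-qubit faults propagate to data errors of the form (j·(1+x), 0), the effective distance of the [[d², 2, d]] GB code equals its minimum distance d.) -/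
open Polynomial

noncomputable section

/-!
Write `U = u + j(1+x)` and `m = d + 1`. A cycle has the form `(U, U·P_m + ε·P_n)` with `ε ∈ 𝔽₂`, and
it is a stabilizer exactly when `ε = 0` and the augmentation `η = U(1)` vanishes. Pair it with a
"staircase" `(P_p(x), x^c·P_q(x^m))` for which `P_p + x^c·P_{mq}` is a multiple `l·P_n` of the
all-ones vector: the result is `(ηl + εq)·P_n`. Whenever this is nonzero it has weight `n`, whereas
expanding the pairing bounds its weight by `p·wt(u) + q·wt(v) + 2·wt(j)`.

With `d = 2e` and `n = 2e²`, the shape `(p, q) = (e, e)` settles the case `η + εe = 1`. Otherwise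
`ε = 1`, and both `(e+1, e-1)` and `(1, 2e-1)` give nonzero pairings; averaging the two bounds with
weights `e-1` and `1` again yields `n ≤ e·wt(u) + e·wt(v) + 2·wt(j)`. As `e ≥ 2`, this is at most
`e·(wt(j) + wt(u) + wt(v))`.
-/

section GeomSum

variable {A : Type*} [Semiring A] (x : A)

lemma geom_sum_add (k l : ℕ) :
    ∑ i ∈ Finset.range (k + l), x ^ i =
      ∑ i ∈ Finset.range k, x ^ i + x ^ k * ∑ i ∈ Finset.range l, x ^ i := by
  simp only [Finset.sum_range_add, Finset.mul_sum, pow_add]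

lemma geom_sum_mul_geom_sum_pow (k l : ℕ) :
    (∑ i ∈ Finset.range k, x ^ i) * ∑ i ∈ Finset.range l, (x ^ k) ^ i =
      ∑ i ∈ Finset.range (k * l), x ^ i := by
  induction l with
  | zero => simp
  | succ l ih =>
    have hcomm : Commute (∑ i ∈ Finset.range k, x ^ i) (x ^ k) :=
      Commute.sum_left _ _ _ fun i _ => Commute.pow_pow_self x i k
    rw [geom_sum_succ, mul_add, mul_one, ← mul_assoc, hcomm.eq, mul_assoc, ih, Nat.mul_succ,
      add_comm (k * l), geom_sum_add, add_comm]

end GeomSum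

section Augmentation

variable {n : ℕ}

lemma mkR_X : mkR n X = xR n := AdjoinRoot.mk_X

lemma mkR_C (c : ZMod 2) : mkR n (C c) = algebraMap (ZMod 2) (R2 n) c := rfl

lemma mkR_surjective : Function.Surjective (mkR n) := AdjoinRoot.mk_surjective

lemma mkR_eq_zero_iff_dvd {p : (ZMod 2)[X]} : mkR n p = 0 ↔ X ^ n - 1 ∣ p := AdjoinRoot.mk_eq_zero

/-- The augmentation `𝔽₂[x]/(xⁿ − 1) → 𝔽₂`, that is, evaluation at `x = 1`. It decides whether an
element is a multiple of `1 + x`. -/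
def augmentation (n : ℕ) : R2 n →ₐ[ZMod 2] ZMod 2 :=
  AdjoinRoot.liftAlgHom _ (AlgHom.id (ZMod 2) (ZMod 2)) 1 (by simp)

lemma augmentation_mkR (p : (ZMod 2)[X]) : augmentation n (mkR n p) = p.eval 1 := by
  simp [augmentation, mkR, eval₂_eq_eval_map]

instance R2.charP : CharP (R2 n) 2 :=
  have := (augmentation n).toRingHom.domain_nontrivial
  charP_of_injective_algebraMap (algebraMap (ZMod 2) (R2 n)).injective 2

lemma mkR_X_sub_one : mkR n (X - 1) = 1 + xR n := by
  rw [map_sub, map_one, mkR_X, CharTwo.sub_eq_add, add_comm]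

lemma one_add_xR_dvd_sub_augmentation (f : R2 n) :
    1 + xR n ∣ f - algebraMap (ZMod 2) (R2 n) (augmentation n f) := by
  obtain ⟨p, rfl⟩ := mkR_surjective f
  rw [augmentation_mkR, ← mkR_C, ← map_sub, ← mkR_X_sub_one]
  simpa using map_dvd (mkR n) (X_sub_C_dvd_sub_C_eval (p := p) (a := 1))

lemma one_add_xR_dvd_of_augmentation_eq_zero {f : R2 n} (hf : augmentation n f = 0) :
    1 + xR n ∣ f := by
  simpa [hf] using one_add_xR_dvd_sub_augmentation f

lemma augmentation_xR : augmentation n (xR n) = 1 := by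
  rw [← mkR_X, augmentation_mkR, eval_X]

end Augmentation

section AllOnes

variable {n : ℕ}

lemma PmR_add (k l : ℕ) : PmR n (k + l) = PmR n k + xR n ^ k * PmR n l :=
  geom_sum_add (xR n) k l

lemma mkR_PmP (m : ℕ) : mkR n (PmP m) = PmR n m := by
  simp only [PmP, PmR, map_sum, map_pow, mkR_X]

lemma one_add_xR_mul_PmR (m : ℕ) : (1 + xR n) * PmR n m = 1 + xR n ^ m := by
  simpa only [PmR, CharTwo.sub_eq_add] using mul_neg_geom_sum (xR n) m

lemma one_add_xR_mul_PmR_self : (1 + xR n) * PmR n n = 0 := by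
  rw [one_add_xR_mul_PmR, xR_pow_n, CharTwo.add_self_eq_zero]

lemma mul_PmR_self (f : R2 n) : f * PmR n n = augmentation n f • PmR n n := by
  obtain ⟨g, hg⟩ := one_add_xR_dvd_sub_augmentation f
  rw [Algebra.smul_def]
  linear_combination PmR n n * hg + g * one_add_xR_mul_PmR_self (n := n)

lemma xR_pow_mul_PmR_self (k : ℕ) : xR n ^ k * PmR n n = PmR n n := by
  rw [mul_PmR_self, map_pow, augmentation_xR, one_pow, one_smul]

lemma PmR_add_self (k : ℕ) : PmR n (k + n) = PmR n k + PmR n n := by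
  rw [PmR_add, xR_pow_mul_PmR_self]

lemma exists_eq_smul_PmR_self {f : R2 n} (hf : (1 + xR n) * f = 0) :
    ∃ c : ZMod 2, f = c • PmR n n := by
  obtain ⟨p, rfl⟩ := mkR_surjective f
  rw [← mkR_X_sub_one, ← map_mul, mkR_eq_zero_iff_dvd, ← mul_geom_sum] at hf
  have hX : (X - 1 : (ZMod 2)[X]) ≠ 0 := by simpa using X_sub_C_ne_zero (1 : ZMod 2)
  obtain ⟨q, rfl⟩ := (mul_dvd_mul_iff_left hX).mp hf
  exact ⟨augmentation n (mkR n q), by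
    rw [← mul_PmR_self, ← mkR_PmP, ← map_mul, PmP, mul_comm]⟩

end AllOnes

section Weight

variable {n : ℕ}

lemma monic_X_pow_sub_one (hn : n ≠ 0) : (X ^ n - 1 : (ZMod 2)[X]).Monic := by
  simpa using monic_X_pow_sub_C (1 : ZMod 2) hn

lemma mkR_repP (hn : n ≠ 0) (f : R2 n) : mkR n (repP f) = f := by
  rw [repP, dif_neg hn]
  exact AdjoinRoot.mk_leftInverse (monic_X_pow_sub_one hn) f

lemma repP_mkR_of_degree_lt {p : (ZMod 2)[X]} (hn : n ≠ 0) (hp : p.degree < n) :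
    repP (mkR n p) = p := by
  rw [repP, dif_neg hn]
  refine (AdjoinRoot.modByMonicHom_mk _ p).trans ?_
  rwa [modByMonic_eq_self_iff (monic_X_pow_sub_one hn), ← C_1,
    degree_X_pow_sub_C (Nat.pos_of_ne_zero hn)]

lemma wt_eq_zero_of_length_eq_zero (hn : n = 0) (f : R2 n) : wt f = 0 := by
  simp [wt, repP, hn]

lemma wt_zero : wt (0 : R2 n) = 0 := by
  simp [wt, repP]

lemma wt_add_le (f g : R2 n) : wt (f + g) ≤ wt f + wt g := by
  have repP_add : repP (f + g) = repP f + repP g := by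
    by_cases hn : n = 0 <;> simp [repP, hn]
  rw [wt, repP_add]
  exact (Finset.card_le_card support_add).trans (Finset.card_union_le _ _)

lemma wt_sum_le {ι : Type*} (s : Finset ι) (f : ι → R2 n) :
    wt (∑ i ∈ s, f i) ≤ ∑ i ∈ s, wt (f i) :=
  Finset.le_sum_of_subadditive wt wt_zero.le wt_add_le s f

lemma wt_mkR_C_mul_X_pow_le_one (c : ZMod 2) (k : ℕ) : wt (mkR n (C c * X ^ k)) ≤ 1 := by
  by_cases hn : n = 0
  · simp [wt_eq_zero_of_length_eq_zero hn]
  have hpow : xR n ^ k = xR n ^ (k % n) := pow_eq_pow_mod k (xR_pow_n n)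
  have hred : mkR n (C c * X ^ k) = mkR n (C c * X ^ (k % n)) := by
    simp only [map_mul, map_pow, mkR_X, hpow]
  have hdeg : (C c * X ^ (k % n) : (ZMod 2)[X]).degree < n :=
    (degree_C_mul_X_pow_le _ _).trans_lt <| by
      exact_mod_cast Nat.mod_lt k (Nat.pos_of_ne_zero hn)
  rw [hred, wt, repP_mkR_of_degree_lt hn hdeg]
  exact card_support_C_mul_X_pow_le_one

lemma wt_mkR_le (p : (ZMod 2)[X]) : wt (mkR n p) ≤ p.support.card := by
  conv_lhs => rw [p.as_sum_support_C_mul_X_pow, map_sum]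
  refine (wt_sum_le _ _).trans ?_
  simpa using Finset.sum_le_card_nsmul p.support _ 1 fun i _ =>
    wt_mkR_C_mul_X_pow_le_one (n := n) (p.coeff i) i

lemma wt_mul_le (f g : R2 n) : wt (f * g) ≤ wt f * wt g := by
  by_cases hn : n = 0
  · simp [wt_eq_zero_of_length_eq_zero hn]
  calc wt (f * g) = wt (mkR n (repP f * repP g)) := by rw [map_mul, mkR_repP hn, mkR_repP hn]
    _ ≤ (repP f * repP g).support.card := wt_mkR_le _
    _ ≤ wt f * wt g := card_support_mul_le

lemma wt_sum_xR_pow_le {ι : Type*} (s : Finset ι) (e : ι → ℕ) :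
    wt (∑ i ∈ s, xR n ^ e i) ≤ s.card := by
  refine (wt_sum_le _ _).trans ?_
  simpa [mkR_X] using Finset.sum_le_card_nsmul s _ 1 fun i _ =>
    wt_mkR_C_mul_X_pow_le_one (n := n) 1 (e i)

lemma wt_one_add_xR_pow_le (k : ℕ) : wt (1 + xR n ^ k) ≤ 2 := by
  simpa [Fin.sum_univ_two] using wt_sum_xR_pow_le (n := n) Finset.univ ![0, k]

lemma wt_PmR_le (p : ℕ) : wt (PmR n p) ≤ p := by
  simpa [PmR] using wt_sum_xR_pow_le (n := n) (Finset.range p) id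

lemma wt_PmR_self : wt (PmR n n) = n := by
  by_cases hn : n = 0
  · rw [wt_eq_zero_of_length_eq_zero hn, hn]
  have coeff_PmP (i : ℕ) : (PmP n).coeff i = if i < n then 1 else 0 := by
    simp [PmP, coeff_X_pow]
  have hdeg : (PmP n).degree < n :=
    (degree_lt_iff_coeff_zero _ _).mpr fun i hi => by rw [coeff_PmP, if_neg hi.not_gt]
  have hsupp : (PmP n).support = Finset.range n := by
    ext i
    simp [coeff_PmP]
  rw [← mkR_PmP, wt, repP_mkR_of_degree_lt hn hdeg, hsupp, Finset.card_range]

lemma wt_smul_PmR_self {c : ZMod 2} (hc : c ≠ 0) : wt (c • PmR n n) = n := by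
  obtain rfl : c = 1 := Fin.eq_one_of_ne_zero c hc
  rw [one_smul, wt_PmR_self]

end Weight

section PowerSubstitution

variable {n : ℕ}

lemma substHom_PmR (m q : ℕ) :
    substHom n m (PmR n q) = ∑ i ∈ Finset.range q, (xR n ^ m) ^ i := by
  have substHom_xR : substHom n m (xR n) = xR n ^ m := AdjoinRoot.lift_root _
  simp only [PmR, map_sum, map_pow, substHom_xR]

lemma PmR_mul_substHom_PmR (m q : ℕ) :
    PmR n m * substHom n m (PmR n q) = PmR n (m * q) := by
  rw [substHom_PmR]
  exact geom_sum_mul_geom_sum_pow (xR n) m q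

lemma augmentation_xR_pow_mul_substHom_PmR (c m q : ℕ) :
    augmentation n (xR n ^ c * substHom n m (PmR n q)) = q := by
  simp [substHom_PmR, augmentation_xR]

lemma wt_xR_pow_mul_substHom_PmR_le (c m q : ℕ) :
    wt (xR n ^ c * substHom n m (PmR n q)) ≤ q := by
  simpa [substHom_PmR, Finset.mul_sum, pow_add, pow_mul] using
    wt_sum_xR_pow_le (n := n) (Finset.range q) fun i => c + m * i

end PowerSubstitution

section LogicalErrors

variable {n : ℕ}

lemma exists_eq_of_mem_C1set_diff_C2set {g U v : R2 n}
    (h : (U, v) ∈ C1set n (1 + xR n) ((1 + xR n) * g) \ C2set n (1 + xR n) ((1 + xR n) * g)) :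
    ∃ ε : ZMod 2, v = U * g + ε • PmR n n ∧ (augmentation n U ≠ 0 ∨ ε ≠ 0) := by
  obtain ⟨hC1, hC2⟩ := h
  have hcycle : U * ((1 + xR n) * g) + v * (1 + xR n) = 0 := hC1
  have hker : (1 + xR n) * (v - U * g) = 0 := by
    rw [CharTwo.sub_eq_add v]
    linear_combination hcycle
  obtain ⟨ε, hε⟩ := exists_eq_smul_PmR_self hker
  refine ⟨ε, by rw [← hε]; ring, ?_⟩
  by_contra! ⟨hU, hε0⟩
  obtain ⟨r, hr⟩ := one_add_xR_dvd_of_augmentation_eq_zero hU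
  rw [hε0, zero_smul, sub_eq_zero] at hε
  exact hC2 ⟨r, Prod.ext (by rw [hr]; ring) (by rw [hε, hr]; ring)⟩

end LogicalErrors

section Detectors

variable {n m p q c : ℕ} {j u v : R2 n} {ε l : ZMod 2}

/- The polynomial `s` is paired with `u + j(1+x)`, so a fault in `j` is seen through `(1+x)s`, which
has weight at most two for `s = P_p` however large `p` is. -/
lemma length_le_of_detector {s t : R2 n} {γ : ZMod 2} (hγ : γ ≠ 0)
    (h : (u + j * (1 + xR n)) * s + v * t = γ • PmR n n) :
    n ≤ wt u * wt s + wt v * wt t + wt j * wt ((1 + xR n) * s) :=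
  calc n = wt (γ • PmR n n) := (wt_smul_PmR_self hγ).symm
    _ = wt (u * s + v * t + j * ((1 + xR n) * s)) := by rw [← h]; ring_nf
    _ ≤ wt (u * s) + wt (v * t) + wt (j * ((1 + xR n) * s)) :=
      (wt_add_le _ _).trans (Nat.add_le_add_right (wt_add_le _ _) _)
    _ ≤ wt u * wt s + wt v * wt t + wt j * wt ((1 + xR n) * s) := by
      gcongr <;> exact wt_mul_le _ _

lemma staircase_pairing_eq_smul_PmR_self {U : R2 n} (hv : v = U * PmR n m + ε • PmR n n)
    (hl : PmR n p + xR n ^ c * PmR n (m * q) = l • PmR n n) :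
    U * PmR n p + v * (xR n ^ c * substHom n m (PmR n q)) =
      (augmentation n U * l + ε * q) • PmR n n := by
  set t := xR n ^ c * substHom n m (PmR n q) with ht
  have hPt : PmR n m * t = xR n ^ c * PmR n (m * q) := by
    rw [ht, mul_left_comm, PmR_mul_substHom_PmR]
  have hnt : PmR n n * t = (q : ZMod 2) • PmR n n := by
    rw [mul_comm, mul_PmR_self, ht, augmentation_xR_pow_mul_substHom_PmR]
  calc U * PmR n p + v * t
      = U * (PmR n p + PmR n m * t) + ε • (PmR n n * t) := by
        rw [hv, add_mul, smul_mul_assoc]; ring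
    _ = l • (U * PmR n n) + ε • (q : ZMod 2) • PmR n n := by
        rw [hPt, hl, hnt, mul_smul_comm]
    _ = (augmentation n U * l + ε * q) • PmR n n := by
        rw [mul_PmR_self]; module

lemma length_le_of_staircase (hv : v = (u + j * (1 + xR n)) * PmR n m + ε • PmR n n)
    (hl : PmR n p + xR n ^ c * PmR n (m * q) = l • PmR n n)
    (hne : augmentation n (u + j * (1 + xR n)) * l + ε * q ≠ 0) :
    n ≤ wt u * p + wt v * q + wt j * 2 := by
  refine (length_le_of_detector hne (staircase_pairing_eq_smul_PmR_self hv hl)).trans ?_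
  gcongr
  · exact wt_PmR_le p
  · exact wt_xR_pow_mul_substHom_PmR_le c m q
  · rw [one_add_xR_mul_PmR]
    exact wt_one_add_xR_pow_le p

lemma length_le_balanced_weight {k : ℕ} (hn : n = 2 * (k + 1) ^ 2)
    (hv : v = (u + j * (1 + xR n)) * PmR n (2 * (k + 1) + 1) + ε • PmR n n)
    (hne : augmentation n (u + j * (1 + xR n)) ≠ 0 ∨ ε ≠ 0) :
    n ≤ (wt u + wt v) * (k + 1) + wt j * 2 := by
  have balanced : PmR n (k + 1) + xR n ^ 0 * PmR n ((2 * (k + 1) + 1) * (k + 1)) =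
      (1 : ZMod 2) • PmR n n := by
    have hlen : (2 * (k + 1) + 1) * (k + 1) = k + 1 + n := by rw [hn]; ring
    rw [hlen, PmR_add_self, pow_zero, one_mul, one_smul, CharTwo.add_cancel_left]
  have skew : PmR n (k + 2) + xR n ^ (k + 2) * PmR n ((2 * (k + 1) + 1) * k) =
      (1 : ZMod 2) • PmR n n := by
    have hlen : k + 2 + (2 * (k + 1) + 1) * k = n := by rw [hn]; ring
    rw [← PmR_add, hlen, one_smul]
  have double : PmR n 1 + xR n ^ 1 * PmR n ((2 * (k + 1) + 1) * (2 * k + 1)) =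
      (0 : ZMod 2) • PmR n n := by
    have hlen : 1 + (2 * (k + 1) + 1) * (2 * k + 1) = n + n := by rw [hn]; ring
    rw [← PmR_add, hlen, PmR_add_self, CharTwo.add_self_eq_zero, zero_smul]
  have parity : ∀ η ε κ : ZMod 2, η ≠ 0 ∨ ε ≠ 0 → η * 1 + ε * (κ + 1) ≠ 0 ∨
      η * 1 + ε * κ ≠ 0 ∧ η * 0 + ε * (2 * κ + 1) ≠ 0 := by decide
  rcases parity _ _ k hne with h | ⟨hskew, hdouble⟩
  · linarith [length_le_of_staircase hv balanced (by exact_mod_cast h)]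
  · have h₁ := length_le_of_staircase hv skew hskew
    have h₂ := length_le_of_staircase hv double (by exact_mod_cast hdouble)
    refine le_of_mul_le_mul_left (a := k + 1) ?_ k.succ_pos
    calc (k + 1) * n = k * n + n := by ring
      _ ≤ k * (wt u * (k + 2) + wt v * k + wt j * 2) +
          (wt u * 1 + wt v * (2 * k + 1) + wt j * 2) := by gcongr
      _ = (k + 1) * ((wt u + wt v) * (k + 1) + wt j * 2) := by ring

end Detectors

/-- For the `[[d², 2, d]]` GB code (`d ≥ 4` even, `2n = d²`,
`a = 1+x`, `b = (1+x)·P_{d+1}(x)`): for all `j, u, v ∈ R`, if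
`(u + j·(1+x), v) ∈ C₁(a,b) \ C₂(a,b)` then `wt(j) + wt(u) + wt(v) ≥ d`.
(Hence under the RL syndrome-extraction pattern the effective distance equals `d`.) -/
theorem stmt_14 (d n : ℕ) (hd : Even d) (hd4 : 4 ≤ d) (hn : 2 * n = d ^ 2)
    (a b : R2 n) (ha : a = 1 + xR n) (hb : b = (1 + xR n) * PmR n (d + 1)) :
    ∀ j u v : R2 n, (u + j * (1 + xR n), v) ∈ C1set n a b \ C2set n a b →
      d ≤ wt j + wt u + wt v := by
  intro j u v h
  subst ha hb
  obtain ⟨ε, hv, hne⟩ := exists_eq_of_mem_C1set_diff_C2set h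
  obtain ⟨k, rfl⟩ : ∃ k, d = 2 * (k + 1) := by
    obtain ⟨e, rfl⟩ := hd
    exact ⟨e - 1, by omega⟩
  have hnk : n = 2 * (k + 1) ^ 2 := by linarith
  have hk : 2 ≤ k + 1 := by omega
  have hscaled : (k + 1) * (2 * (k + 1)) ≤ (k + 1) * (wt j + wt u + wt v) :=
    calc (k + 1) * (2 * (k + 1)) = n := by rw [hnk]; ring
      _ ≤ (wt u + wt v) * (k + 1) + wt j * 2 := length_le_balanced_weight hnk hv hne
      _ ≤ (wt u + wt v) * (k + 1) + wt j * (k + 1) := by gcongr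
      _ = (k + 1) * (wt j + wt u + wt v) := by ring
  exact Nat.le_of_mul_le_mul_left hscaled k.succ_pos

end
end

section
/- Let n be a positive integer and a, b ∈ R = 𝔽₂[x]/(xⁿ−1) with coefficient sequences a₀,…,a_{n−1} and b₀,…,b_{n−1} (indices modulo n). The Tanner graph T(a,b) has girth equal to 4 if and only if at least one of the following holds: (i) there exist i, j, j' ∈ ℤ_n with i ≢ 0 (mod n) and j ≠ j' such that a_j = a_{j+i} = 1 and a_{j'} = a_{j'+i} = 1; (ii) there exist i, j, j' ∈ ℤ_n with i ≢ 0 (mod n) and j ≠ j' such that b_j = b_{j+i} = 1 and b_{j'} = b_{j'+i} = 1; (iii) there exist i, j, j' ∈ ℤ_n with j ≠ j' such that a_j = b_{j+i} = 1 and a_{j'} = b_{j'+i} = 1. -/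
open Polynomial

/-!
A bipartite graph has no triangle, so its girth is `4` exactly when two checks share two data
vertices. In `T(a,b)` the data vertices at positions `s` and `s'` are both adjacent to `x_t` iff
`j = s - t` and `j + i` lie in the supports of the respective polynomials, where `i = s' - s` does
not depend on `t`. Two such checks are therefore two occurrences of `i` as a difference of exponents
(of `a`, of `b`, or from `a` to `b`).
-/

section Girth

open SimpleGraph

variable {V : Type*} {G : SimpleGraph V}

lemma four_le_egirth_iff_cliqueFree_three : 4 ≤ G.egirth ↔ G.CliqueFree 3 := by
  have cliqueFree_iff : G.CliqueFree 3 ↔ ∀ v (w : G.Walk v v), w.IsCycle → w.length ≠ 3 := by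
    simpa [CliqueFree] using not_congr (is3Clique_iff_exists_cycle_length_three (G := G))
  rw [cliqueFree_iff, le_egirth]
  refine forall₃_congr fun v w hw ↦ ?_
  have := hw.three_le_length
  norm_cast
  lia

lemma egirth_eq_four_iff :
    G.egirth = 4 ↔ G.CliqueFree 3 ∧ cycleGraph 4 ⊑ G := by
  rw [← four_le_egirth_iff_cliqueFree_three, cycleGraph_isContained_iff (by simp)]
  constructor
  · intro hG
    have not_acyclic : ¬ G.IsAcyclic := by simp [← egirth_eq_top, hG]
    obtain ⟨v, w, hw, hlength⟩ := exists_egirth_eq_length.2 not_acyclic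
    exact ⟨hG.ge, v, w, hw, by exact_mod_cast hlength.symm.trans hG⟩
  · rintro ⟨four_le, v, w, hw, hlength⟩
    exact le_antisymm (by simpa [hlength] using egirth_le_length hw) four_le

lemma cycleGraph_four_isContained_iff :
    cycleGraph 4 ⊑ G ↔ ∃ x x' y y', x ≠ x' ∧ y ≠ y' ∧
      G.Adj x y ∧ G.Adj x y' ∧ G.Adj x' y ∧ G.Adj x' y' := by
  constructor
  · rintro ⟨f⟩
    have adj {i j : Fin 4} (h : (cycleGraph 4).Adj i j) : G.Adj (f i) (f j) := f.toHom.map_adj h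
    exact ⟨f 0, f 2, f 1, f 3, f.injective.ne (by decide), f.injective.ne (by decide),
      adj (by decide), adj (by decide), adj (by decide), adj (by decide)⟩
  · rintro ⟨x, x', y, y', hx, hy, hxy, hxy', hx'y, hx'y'⟩
    refine ⟨⟨⟨![x, y, x', y'], fun {i j} h ↦ ?_⟩, fun i j h ↦ ?_⟩⟩
    · fin_cases i <;> fin_cases j <;>
        first | exact absurd h (by decide) | simpa [G.adj_comm]
    · fin_cases i <;> fin_cases j <;>
        simp_all [hxy.ne, hxy.ne', hxy'.ne, hxy'.ne', hx'y.ne, hx'y.ne', hx'y'.ne, hx'y'.ne']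

end Girth

/-- The Tanner graph of the parity-check relation `r`: the check `c` (left) is joined to the datum
`d` (right) iff `r c d`. -/
def tannerGraph {C D : Type*} (r : C → D → Prop) : SimpleGraph (C ⊕ D) where
  Adj
    | .inl c, .inr d | .inr d, .inl c => r c d
    | _, _ => False
  symm := ⟨by rintro (_ | _) (_ | _) h <;> exact h⟩
  loopless := ⟨by rintro (_ | _) h <;> exact h⟩

section TannerGraph

open SimpleGraph

variable {C D : Type*} (r : C → D → Prop)

@[simp] lemma tannerGraph_adj_inl_inr (c : C) (d : D) :
    (tannerGraph r).Adj (.inl c) (.inr d) ↔ r c d := Iff.rfl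

@[simp] lemma tannerGraph_adj_inr_inl (c : C) (d : D) :
    (tannerGraph r).Adj (.inr d) (.inl c) ↔ r c d := Iff.rfl

@[simp] lemma not_tannerGraph_adj_inl_inl (c c' : C) :
    ¬ (tannerGraph r).Adj (.inl c) (.inl c') := id

@[simp] lemma not_tannerGraph_adj_inr_inr (d d' : D) :
    ¬ (tannerGraph r).Adj (.inr d) (.inr d') := id

lemma tannerGraph_isBipartite : (tannerGraph r).IsBipartite := by
  have le_complete : tannerGraph r ≤ completeBipartiteGraph C D := by
    rintro (_ | _) (_ | _) h <;> simp at h ⊢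
  exact (CompleteBipartiteGraph.bicoloring C D).colorable.mono_left le_complete

lemma cycleGraph_four_isContained_tannerGraph_iff :
    cycleGraph 4 ⊑ tannerGraph r ↔
      ∃ d d', d ≠ d' ∧ ∃ c c', c ≠ c' ∧ r c d ∧ r c d' ∧ r c' d ∧ r c' d' := by
  rw [cycleGraph_four_isContained_iff]
  constructor
  · rintro ⟨x | x, x' | x', y | y, y' | y', hx, hy, hxy, hxy', hx'y, hx'y'⟩ <;>
      simp only [tannerGraph_adj_inl_inr, tannerGraph_adj_inr_inl, not_tannerGraph_adj_inl_inl,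
        not_tannerGraph_adj_inr_inr] at hxy hxy' hx'y hx'y'
    · exact ⟨y, y', ne_of_apply_ne _ hy, x, x', ne_of_apply_ne _ hx, hxy, hxy', hx'y, hx'y'⟩
    · exact ⟨x, x', ne_of_apply_ne _ hx, y, y', ne_of_apply_ne _ hy, hxy, hx'y, hxy', hx'y'⟩
  · rintro ⟨d, d', hd, c, c', hc, h⟩
    exact ⟨.inl c, .inl c', .inr d, .inr d', Sum.inl_injective.ne hc, Sum.inr_injective.ne hd, h⟩

lemma tannerGraph_egirth_eq_four_iff :
    (tannerGraph r).egirth = 4 ↔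
      ∃ d d', d ≠ d' ∧ ∃ c c', c ≠ c' ∧ r c d ∧ r c d' ∧ r c' d ∧ r c' d' := by
  rw [egirth_eq_four_iff, cycleGraph_four_isContained_tannerGraph_iff]
  exact and_iff_right ((tannerGraph_isBipartite r).cliqueFree (by simp))

end TannerGraph

section RepeatedDifference

lemma exists_exists_sub_iff {G : Type*} [AddGroup G] {P : G → Prop} :
    (∃ s s', P (s' - s)) ↔ ∃ i, P i :=
  ⟨fun ⟨_, _, h⟩ ↦ ⟨_, h⟩, fun ⟨i, h⟩ ↦ ⟨0, i, by rwa [sub_zero]⟩⟩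

/-- The element `i` can be written in at least two ways as a difference `k - j` with `j ∈ A` and
`k ∈ B`. The pair is encoded by `j` alone, since `k = j + i`. -/
def IsRepeatedDifference {G : Type*} [Add G] (A B : Set G) (i : G) : Prop :=
  ∃ j j', j ≠ j' ∧ j ∈ A ∧ j + i ∈ B ∧ j' ∈ A ∧ j' + i ∈ B

/-- The Tanner graph of the pair of `G`-circulant blocks with supports `A` and `B`: the check `t` is
joined to the datum `s` of the first block iff `s - t ∈ A`, and to that of the second block iff
`s - t ∈ B`. -/
def circulantTannerGraph {G : Type*} [Sub G] (A B : Set G) : SimpleGraph (G ⊕ (G ⊕ G)) :=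
  tannerGraph fun t ↦ Sum.elim (· - t ∈ A) (· - t ∈ B)

variable {G : Type*} [AddCommGroup G] {A B : Set G}

lemma isRepeatedDifference_sub_iff {s s' : G} :
    IsRepeatedDifference A B (s' - s) ↔
      ∃ t t', t ≠ t' ∧ s - t ∈ A ∧ s' - t ∈ B ∧ s - t' ∈ A ∧ s' - t' ∈ B :=
  .symm <| (Equiv.subLeft s).exists_congr fun _ ↦ (Equiv.subLeft s).exists_congr fun _ ↦ by simp

lemma isRepeatedDifference_sub_comm {s s' : G} :
    IsRepeatedDifference A B (s' - s) ↔ IsRepeatedDifference B A (s - s') := by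
  simp only [isRepeatedDifference_sub_iff, and_comm, and_left_comm]

theorem stmt_15_general (A B : Set G) :
    (circulantTannerGraph A B).egirth = 4 ↔
      (∃ i, i ≠ 0 ∧ IsRepeatedDifference A A i) ∨
      (∃ i, i ≠ 0 ∧ IsRepeatedDifference B B i) ∨
      ∃ i, IsRepeatedDifference A B i := by
  rw [circulantTannerGraph, tannerGraph_egirth_eq_four_iff]
  simp only [Sum.exists, Sum.elim_inl, Sum.elim_inr, ← isRepeatedDifference_sub_iff, exists_or]
  have same_block (S : Set G) : (∃ s s', s ≠ s' ∧ IsRepeatedDifference S S (s' - s)) ↔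
      ∃ i, i ≠ 0 ∧ IsRepeatedDifference S S i := by
    simp only [← exists_exists_sub_iff (P := fun i : G ↦ i ≠ 0 ∧ IsRepeatedDifference S S i),
      sub_ne_zero, ne_comm]
  have first_to_second : (∃ s s', IsRepeatedDifference A B (s' - s)) ↔
      ∃ i, IsRepeatedDifference A B i := exists_exists_sub_iff
  have second_to_first : (∃ s s', IsRepeatedDifference B A (s' - s)) ↔
      ∃ i, IsRepeatedDifference A B i := by
    rw [exists_comm, ← first_to_second]
    simp only [isRepeatedDifference_sub_comm (A := A)]
  simp only [ne_eq, Sum.inl.injEq, Sum.inr.injEq, reduceCtorEq, not_false_eq_true, true_and]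
  rw [same_block A, same_block B, first_to_second, second_to_first]
  simp only [or_assoc, or_comm, or_left_comm, or_self_left]

end RepeatedDifference

lemma tanner_eq_circulantTannerGraph {n : ℕ} (a b : R2 n) :
    tanner n a b = circulantTannerGraph {i | coeffZ a i = 1} {i | coeffZ b i = 1} := by
  ext (_ | _ | _) (_ | _ | _) <;>
    simp [tanner, trel, TV, circulantTannerGraph]

lemma tanner_egirth_eq {n : ℕ} (a b : R2 n) : (tanner n a b).egirth =
    (circulantTannerGraph {i | coeffZ a i = 1} {i | coeffZ b i = 1}).egirth :=
  congrArg SimpleGraph.egirth (tanner_eq_circulantTannerGraph a b)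

noncomputable section

/-- The Tanner graph `T(a,b)` of a GB code has girth `4` iff one of the
three listed coefficient conditions holds (indices in `ℤ/n`, coefficients of the
degree-`< n` representatives of `a` and `b`). -/
theorem stmt_15 (n : ℕ) (hn : 0 < n) (a b : R2 n) :
    (tanner n a b).egirth = 4 ↔
      ((∃ i j j' : ZMod n, i ≠ 0 ∧ j ≠ j' ∧
          coeffZ a j = 1 ∧ coeffZ a (j + i) = 1 ∧ coeffZ a j' = 1 ∧ coeffZ a (j' + i) = 1) ∨
       (∃ i j j' : ZMod n, i ≠ 0 ∧ j ≠ j' ∧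
          coeffZ b j = 1 ∧ coeffZ b (j + i) = 1 ∧ coeffZ b j' = 1 ∧ coeffZ b (j' + i) = 1) ∨
       (∃ i j j' : ZMod n, j ≠ j' ∧
          coeffZ a j = 1 ∧ coeffZ b (j + i) = 1 ∧ coeffZ a j' = 1 ∧ coeffZ b (j' + i) = 1)) := by
  rw [tanner_egirth_eq]
  simpa only [IsRepeatedDifference, exists_and_left, Set.mem_ofPred_eq] using
    stmt_15_general {i | coeffZ a i = 1} {i | coeffZ b i = 1}

end
end

section
/- Let n be a positive integer and a, b ∈ R = 𝔽₂[x]/(xⁿ−1) with coefficient sequences a₀,…,a_{n−1} and b₀,…,b_{n−1} (indices modulo n), and suppose the Tanner graph T(a,b) contains no cycle of length 4. Then T(a,b) has girth equal to 6 if and only if there exist i, j ∈ ℤ_n with i ≢ 0, j ≢ 0, and i + j ≢ 0 (mod n), and indices ℓ, ℓ', ℓ'' ∈ ℤ_n, such that at least one of the following holds: (i) a_ℓ = a_{ℓ+i} = 1, a_{ℓ'} = a_{ℓ'+j} = 1, and a_{ℓ''} = a_{ℓ''+i+j} = 1; (ii) b_ℓ = b_{ℓ+i} = 1, b_{ℓ'}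 = b_{ℓ'+j} = 1, and b_{ℓ''} = b_{ℓ''+i+j} = 1; (iii) a_ℓ = a_{ℓ+i} = 1, a_{ℓ'} = a_{ℓ'+j} = 1, and b_{ℓ''} = b_{ℓ''+i+j} = 1; (iv) b_ℓ = b_{ℓ+i} = 1, b_{ℓ'} = b_{ℓ'+j} = 1, and a_{ℓ''} = a_{ℓ''+i+j} = 1. -/
open Polynomial

/-! A bipartite graph without 4-cycles has girth at least 6, so its girth is 6 iff it contains a
hexagon. Going round a hexagon `x₀ y₀ x₁ y₁ x₂ y₂` in a translation-invariant incidence graph, the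
differences `xₖ - xₖ₊₁` are nonzero, sum to zero, and are differences of elements of the connection
sets; when only two connection sets are available, two of the three differences come from the same
one. Conversely, three such differences give three checks that are pairwise joined through data
vertices. If these data vertices coincide, some connection set contains three elements `pₖ`, and the
checks `pₖ` together with the data vertices `pₖ + pₖ₊₁` form a hexagon. -/

section Girth

open SimpleGraph

variable {V : Type*} {G : SimpleGraph V}

lemma egirth_eq_iff_cycleGraph_isContained {k : ℕ} (hk : 3 ≤ k) (h : k ≤ G.egirth) :
    G.egirth = k ↔ cycleGraph k ⊑ G := by
  rw [cycleGraph_isContained_iff hk]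
  constructor
  · intro hG
    have hcyc : ¬ G.IsAcyclic := by
      rw [← egirth_eq_top, hG]
      exact ENat.natCast_ne_top k
    obtain ⟨v, c, hc, hlen⟩ := exists_egirth_eq_length.2 hcyc
    exact ⟨v, c, hc, by exact_mod_cast hlen.symm.trans hG⟩
  · rintro ⟨v, c, hc, rfl⟩
    exact le_antisymm (egirth_le_length hc) h

lemma cycleGraph_free_iff {k : ℕ} (hk : 3 ≤ k) :
    (cycleGraph k).Free G ↔ ∀ (v : V) (c : G.Walk v v), c.IsCycle → c.length ≠ k := by
  simp only [Free, cycleGraph_isContained_iff hk, not_exists, not_and, ne_eq]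

lemma six_le_egirth_of_isBipartite (hG : G.IsBipartite) (h4 : (cycleGraph 4).Free G) :
    6 ≤ G.egirth := by
  rw [le_egirth]
  intro v c hc
  have heven : Even c.length := two_colorable_iff_forall_loop_even.1 hG v c
  have hthree : 3 ≤ c.length := hc.three_le_length
  have hfour : c.length ≠ 4 := (cycleGraph_free_iff (by norm_num)).1 h4 v c hc
  have hsix : 6 ≤ c.length := by grind
  exact_mod_cast hsix

lemma cycleGraph_six_isContained_iff :
    cycleGraph 6 ⊑ G ↔ ∃ u v : Fin 3 → V, (Sum.elim u v).Injective ∧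
      (∀ k, G.Adj (u k) (v k)) ∧ ∀ k, G.Adj (v k) (u (k + 1)) := by
  constructor
  · rintro ⟨f⟩
    refine ⟨f ∘ ![0, 2, 4], f ∘ ![1, 3, 5], ?_, fun k => f.toHom.map_adj ?_,
      fun k => f.toHom.map_adj ?_⟩
    · rw [← Sum.comp_elim]
      exact f.injective.comp (by decide)
    · decide +revert
    · decide +revert
  · rintro ⟨u, v, hinj, huv, hvu⟩
    let f : Fin 6 → V := Sum.elim u v ∘ ![.inl 0, .inr 0, .inl 1, .inr 1, .inl 2, .inr 2]
    have hf : f.Injective := hinj.comp (by decide)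
    have hadj (k) : G.Adj (f k) (f (k + 1)) := by
      fin_cases k
      exacts [huv 0, hvu 0, huv 1, hvu 1, huv 2, hvu 2]
    refine ⟨⟨⟨f, fun {k m} hkm => ?_⟩, hf⟩⟩
    rcases cycleGraph_adj.1 hkm with h | h
    · exact sub_eq_iff_eq_add'.1 h ▸ (hadj m).symm
    · exact sub_eq_iff_eq_add'.1 h ▸ hadj k

end Girth

section Incidence

open SimpleGraph

variable {α β : Type*} {I : α → β → Prop}

/-- The incidence graph (Levi graph) of a relation `I`: the bipartite graph on `α ⊕ β` in which
`x : α` is adjacent to `y : β` iff `I x y`. -/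
def incidenceGraph (I : α → β → Prop) : SimpleGraph (α ⊕ β) where
  Adj
    | .inl x, .inr y => I x y
    | .inr y, .inl x => I x y
    | _, _ => False
  symm := ⟨by rintro (x | y) (x' | y') h <;> exact h⟩
  loopless := ⟨by rintro (x | y) h <;> exact h⟩

lemma exists_eq_inr_of_incidenceGraph_adj {x : α} {w : α ⊕ β}
    (h : (incidenceGraph I).Adj (.inl x) w) : ∃ y, w = .inr y := by
  rcases w with _ | y
  exacts [h.elim, ⟨y, rfl⟩]

lemma exists_eq_inl_of_incidenceGraph_adj {y : β} {w : α ⊕ β}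
    (h : (incidenceGraph I).Adj (.inr y) w) : ∃ x, w = .inl x := by
  rcases w with x | _
  exacts [⟨x, rfl⟩, h.elim]

lemma isBipartite_incidenceGraph (I : α → β → Prop) : (incidenceGraph I).IsBipartite := by
  have hle : incidenceGraph I ≤ completeBipartiteGraph α β := by
    rintro (_ | _) (_ | _) h <;> simp_all [incidenceGraph]
  exact ((CompleteBipartiteGraph.bicoloring α β).colorable).mono_left hle

/-- `x 0, y 0, x 1, y 1, x 2, y 2` are the vertices, in cyclic order, of a hexagon in the incidence
graph of `I`. Indices are added in `Fin 3`, that is, modulo `3`. -/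
structure IsHexagon (I : α → β → Prop) (x : Fin 3 → α) (y : Fin 3 → β) : Prop where
  injective_left : x.Injective
  injective_right : y.Injective
  rel (k : Fin 3) : I (x k) (y k)
  rel_succ (k : Fin 3) : I (x (k + 1)) (y k)

lemma exists_isHexagon_of_adj {u v : Fin 3 → α ⊕ β} (hinj : (Sum.elim u v).Injective)
    (huv : ∀ k, (incidenceGraph I).Adj (u k) (v k))
    (hvu : ∀ k, (incidenceGraph I).Adj (v k) (u (k + 1))) (h₀ : ∃ x, u 0 = .inl x) :
    ∃ x y, IsHexagon I x y := by
  have hsucc (k) (h : ∃ x, u k = .inl x) : ∃ x, u (k + 1) = .inl x := by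
    obtain ⟨x, hx⟩ := h
    obtain ⟨y, hy⟩ := exists_eq_inr_of_incidenceGraph_adj (hx ▸ huv k)
    exact exists_eq_inl_of_incidenceGraph_adj (hy ▸ hvu k)
  have hleft (k) : ∃ x, u k = .inl x := by
    fin_cases k
    exacts [h₀, hsucc 0 h₀, hsucc 1 (hsucc 0 h₀)]
  choose x hx using hleft
  choose y hy using fun k => exists_eq_inr_of_incidenceGraph_adj (hx k ▸ huv k)
  obtain rfl : u = Sum.inl ∘ x := funext hx
  obtain rfl : v = Sum.inr ∘ y := funext hy
  have hxy := Sum.elim_injective.1 hinj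
  exact ⟨x, y, hxy.1.of_comp, hxy.2.1.of_comp, huv, hvu⟩

lemma cycleGraph_six_isContained_incidenceGraph_iff :
    cycleGraph 6 ⊑ incidenceGraph I ↔ ∃ x y, IsHexagon I x y := by
  rw [cycleGraph_six_isContained_iff]
  constructor
  · rintro ⟨u, v, hinj, huv, hvu⟩
    rcases h₀ : u 0 with x | y
    · exact exists_isHexagon_of_adj hinj huv hvu ⟨x, h₀⟩
    · have hinj' : (Sum.elim v (u ∘ (· + 1))).Injective := by
        rw [Sum.elim_injective] at hinj ⊢
        exact ⟨hinj.2.1, hinj.1.comp (add_left_injective 1), fun k m => (hinj.2.2 (m + 1) k).symm⟩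
      exact exists_isHexagon_of_adj hinj' hvu (fun k => huv (k + 1))
        (exists_eq_inl_of_incidenceGraph_adj (h₀ ▸ huv 0))
  · rintro ⟨x, y, h⟩
    exact ⟨.inl ∘ x, .inr ∘ y,
      h.injective_left.sumMap h.injective_right, h.rel, h.rel_succ⟩

end Incidence

section Shift

open scoped Pointwise

variable {G ι : Type*} [AddCommGroup G] {S : ι → Set G}

/-- The translation-invariant incidence relation with connection sets `S e`: the point `t` is
incident to the point `s` of the `e`-th copy of `G` iff `s - t ∈ S e`. -/
def shiftRel (S : ι → Set G) (t : G) (q : ι × G) : Prop := q.2 - t ∈ S q.1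

/-- `d 0, d 1, d 2` are nonzero elements with sum zero, and `d k` is a difference of two elements
of `S (e k)`. -/
structure IsDifferenceTriangle (S : ι → Set G) (e : Fin 3 → ι) (d : Fin 3 → G) : Prop where
  ne_zero (k : Fin 3) : d k ≠ 0
  sum_eq_zero : ∑ k, d k = 0
  mem_sub (k : Fin 3) : d k ∈ S (e k) - S (e k)

lemma IsHexagon.isDifferenceTriangle {x : Fin 3 → G} {y : Fin 3 → ι × G}
    (h : IsHexagon (shiftRel S) x y) :
    IsDifferenceTriangle S (fun k => (y k).1) (fun k => x k - x (k + 1)) where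
  ne_zero k := sub_ne_zero.2 (h.injective_left.ne (by decide +revert))
  sum_eq_zero := by
    rw [Finset.sum_sub_distrib, sub_eq_zero]
    exact (Equiv.sum_comp (Equiv.addRight 1) x).symm
  mem_sub k := ⟨_, h.rel_succ k, _, h.rel k, sub_sub_sub_cancel_left _ _ _⟩

/-- The hexagon closes because `p k + p (k + 1) = p (k + 1) + p k`. -/
lemma isHexagon_shiftRel_of_injective {e : ι} {p : Fin 3 → G} (hp : p.Injective)
    (hS : ∀ k, p k ∈ S e) : IsHexagon (shiftRel S) p (fun k => (e, p k + p (k + 1))) where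
  injective_left := hp
  injective_right := by
    have hsum (k) : p k + p (k + 1) = ∑ m, p m - p (k + 2) := by
      fin_cases k <;> simp [Fin.sum_univ_three] <;> abel
    have hinj : Function.Injective fun k => ∑ m, p m - p (k + 2) :=
      sub_right_injective.comp (hp.comp (add_left_injective 2))
    intro k m hkm
    exact hinj (by simpa only [Prod.mk.injEq, true_and, hsum] using hkm)
  rel k := by simpa [shiftRel] using hS (k + 1)
  rel_succ k := by simpa [shiftRel] using hS k

/-- If two of the `y k` coincide, this point is incident to all three `x k`, so one of the
connection sets has three elements. -/
lemma exists_isHexagon_of_shiftRel {x : Fin 3 → G} {y : Fin 3 → ι × G} (hx : x.Injective)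
    (h : ∀ k, shiftRel S (x k) (y k)) (h_succ : ∀ k, shiftRel S (x (k + 1)) (y k)) :
    ∃ x y, IsHexagon (shiftRel S) x y := by
  by_cases hy : y.Injective
  · exact ⟨x, y, hx, hy, h, h_succ⟩
  obtain ⟨k, m, hkm, hne⟩ : ∃ k m, y k = y m ∧ k ≠ m := by
    simpa [Function.Injective] using hy
  have hall (l) : shiftRel S (x l) (y k) := by
    have hcover : ∀ k m l : Fin 3, k ≠ m → l = k ∨ l = k + 1 ∨ l = m ∨ l = m + 1 := by decide
    rcases hcover k m l hne with rfl | rfl | rfl | rfl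
    exacts [h _, h_succ _, hkm ▸ h _, hkm ▸ h_succ _]
  exact ⟨_, _, isHexagon_shiftRel_of_injective (sub_right_injective.comp hx) hall⟩

lemma IsDifferenceTriangle.exists_isHexagon {e : Fin 3 → ι} {d : Fin 3 → G}
    (h : IsDifferenceTriangle S e d) : ∃ x y, IsHexagon (shiftRel S) x y := by
  let x : Fin 3 → G := ![0, -d 0, d 2]
  have hx (k) : x k - x (k + 1) = d k := by
    have hsum := h.sum_eq_zero
    rw [Fin.sum_univ_three] at hsum
    fin_cases k
    · simp [x]
    · simpa [x, sub_eq_iff_eq_add, neg_eq_iff_add_eq_zero, add_assoc] using hsum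
    · simp [x]
  have hinj : x.Injective := by
    intro k m hkm
    by_contra hne
    have hconsecutive : ∀ k m : Fin 3, k ≠ m → m = k + 1 ∨ k = m + 1 := by decide
    rcases hconsecutive k m hne with rfl | rfl
    · exact h.ne_zero k (by rw [← hx, hkm, sub_self])
    · exact h.ne_zero m (by rw [← hx, hkm, sub_self])
  choose q hq p hp hqp using fun k => Set.mem_sub.1 (h.mem_sub k)
  refine exists_isHexagon_of_shiftRel (y := fun k => (e k, x k + p k)) hinj (fun k => ?_)
    (fun k => ?_)
  · simpa [shiftRel] using hp k
  · have hqk : x k + p k - x (k + 1) = q k := by rw [add_sub_right_comm, hx, ← hqp, sub_add_cancel]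
    simpa [shiftRel, hqk] using hq k

lemma exists_isHexagon_shiftRel_iff :
    (∃ x y, IsHexagon (shiftRel S) x y) ↔ ∃ e d, IsDifferenceTriangle S e d :=
  ⟨fun ⟨_, _, h⟩ => ⟨_, _, h.isDifferenceTriangle⟩, fun ⟨_, _, h⟩ => h.exists_isHexagon⟩

theorem egirth_incidenceGraph_shiftRel_eq_six_iff
    (h4 : (SimpleGraph.cycleGraph 4).Free (incidenceGraph (shiftRel S))) :
    (incidenceGraph (shiftRel S)).egirth = 6 ↔ ∃ e d, IsDifferenceTriangle S e d := by
  have hsix := six_le_egirth_of_isBipartite (isBipartite_incidenceGraph _) h4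
  rw [← exists_isHexagon_shiftRel_iff, ← cycleGraph_six_isContained_incidenceGraph_iff]
  exact egirth_eq_iff_cycleGraph_isContained (by norm_num) hsix

lemma neg_mem_sub_self_iff {A : Set G} {d : G} : -d ∈ A - A ↔ d ∈ A - A := by
  rw [← Set.mem_neg, neg_sub]

lemma mem_sub_self_iff {A : Set G} {d : G} : d ∈ A - A ↔ ∃ l, l ∈ A ∧ l + d ∈ A := by
  rw [Set.mem_sub]
  constructor
  · rintro ⟨q, hq, p, hp, rfl⟩
    exact ⟨p, hp, by rwa [add_sub_cancel]⟩
  · rintro ⟨l, hl, hld⟩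
    exact ⟨_, hld, l, hl, add_sub_cancel_left l d⟩

/-- With at most two connection sets, two of the three differences come from the same one. -/
lemma exists_isDifferenceTriangle_iff_of_card_lt [Fintype ι] (hι : Fintype.card ι < 3) :
    (∃ e d, IsDifferenceTriangle S e d) ↔
      ∃ i j : G, i ≠ 0 ∧ j ≠ 0 ∧ i + j ≠ 0 ∧
        ∃ e f, i ∈ S e - S e ∧ j ∈ S e - S e ∧ i + j ∈ S f - S f := by
  constructor
  · rintro ⟨e, d, h⟩
    obtain ⟨k, m, hne, hkm⟩ := Fintype.exists_ne_map_eq_of_card_lt e (by simpa using hι)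
    have hthird : ∀ k m : Fin 3, k ≠ m → ∃ l, k ≠ l ∧ m ≠ l ∧ Finset.univ = {k, m, l} := by decide
    obtain ⟨l, hkl, hml, huniv⟩ := hthird k m hne
    have hsum : d k + d m = -d l := by
      rw [eq_neg_iff_add_eq_zero, add_assoc, ← h.sum_eq_zero, huniv,
        Finset.sum_insert (by simp [hne, hkl]), Finset.sum_pair hml]
    refine ⟨d k, d m, h.ne_zero k, h.ne_zero m, ?_, e k, e l, h.mem_sub k, ?_, ?_⟩
    · simpa [hsum] using h.ne_zero l
    · exact hkm ▸ h.mem_sub m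
    · simpa only [hsum, neg_mem_sub_self_iff] using h.mem_sub l
  · rintro ⟨i, j, hi, hj, hij, e, f, hie, hje, hijf⟩
    refine ⟨![e, e, f], ![i, j, -(i + j)], ?_, ?_, ?_⟩
    · simp [Fin.forall_fin_succ, hi, hj, hij, -neg_add_rev]
    · simp [Fin.sum_univ_three, -neg_add_rev]
    · simp [Fin.forall_fin_succ, hie, hje, hijf, neg_mem_sub_self_iff, -neg_add_rev]

end Shift

section Tanner

variable {n : ℕ}

/-- The supports of the coefficient sequences of `a` (index `false`) and `b` (index `true`). -/
def coeffSupport (a b : R2 n) (e : Bool) : Set (ZMod n) := {i | coeffZ (bif e then b else a) i = 1}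

/-- The Tanner graph as an incidence graph; `q_s` becomes `(false, s)` and `q'_s` becomes
`(true, s)`. -/
def tannerIso (a b : R2 n) : tanner n a b ≃g incidenceGraph (shiftRel (coeffSupport a b)) where
  toFun
    | .inl t => .inl t
    | .inr (.inl s) => .inr (false, s)
    | .inr (.inr s) => .inr (true, s)
  invFun
    | .inl t => .inl t
    | .inr (false, s) => .inr (.inl s)
    | .inr (true, s) => .inr (.inr s)
  left_inv := by rintro (_ | _ | _) <;> rfl
  right_inv := by rintro (_ | ⟨_ | _, _⟩) <;> rfl
  map_rel_iff' := by
    rintro (t | s | s) (t' | s' | s') <;>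
      dsimp [incidenceGraph, shiftRel, coeffSupport] <;> simp [TV, tanner, trel]

end Tanner

noncomputable section

/-- If the Tanner graph `T(a,b)` of a GB code contains no cycle of
length `4`, then it has girth `6` iff one of the four listed coefficient conditions holds
(with `i ≢ 0`, `j ≢ 0`, `i + j ≢ 0 (mod n)`). -/
theorem stmt_16 (n : ℕ) (hn : 0 < n) (a b : R2 n)
    (h4 : ∀ (v : TV n) (c : (tanner n a b).Walk v v), c.IsCycle → c.length ≠ 4) :
    (tanner n a b).egirth = 6 ↔
      ∃ i j : ZMod n, i ≠ 0 ∧ j ≠ 0 ∧ i + j ≠ 0 ∧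
        ∃ l l' l'' : ZMod n,
          ((coeffZ a l = 1 ∧ coeffZ a (l + i) = 1 ∧ coeffZ a l' = 1 ∧ coeffZ a (l' + j) = 1 ∧
              coeffZ a l'' = 1 ∧ coeffZ a (l'' + i + j) = 1) ∨
           (coeffZ b l = 1 ∧ coeffZ b (l + i) = 1 ∧ coeffZ b l' = 1 ∧ coeffZ b (l' + j) = 1 ∧
              coeffZ b l'' = 1 ∧ coeffZ b (l'' + i + j) = 1) ∨
           (coeffZ a l = 1 ∧ coeffZ a (l + i) = 1 ∧ coeffZ a l' = 1 ∧ coeffZ a (l' + j) = 1 ∧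
              coeffZ b l'' = 1 ∧ coeffZ b (l'' + i + j) = 1) ∨
           (coeffZ b l = 1 ∧ coeffZ b (l + i) = 1 ∧ coeffZ b l' = 1 ∧ coeffZ b (l' + j) = 1 ∧
              coeffZ a l'' = 1 ∧ coeffZ a (l'' + i + j) = 1)) := by
  have hfree : (SimpleGraph.cycleGraph 4).Free (incidenceGraph (shiftRel (coeffSupport a b))) :=
    (SimpleGraph.free_congr_right (tannerIso a b)).1 ((cycleGraph_free_iff (by norm_num)).2 h4)
  rw [(tannerIso a b).egirth_eq, egirth_incidenceGraph_shiftRel_eq_six_iff hfree,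
    exists_isDifferenceTriangle_iff_of_card_lt (by simp)]
  simp only [mem_sub_self_iff, Bool.exists_bool, coeffSupport, Set.mem_ofPred_eq, cond_true,
    cond_false, ← add_assoc]
  refine exists₂_congr fun i j =>
    and_congr_right' (and_congr_right' (and_congr_right' ⟨fun h => ?_, fun h => ?_⟩))
  all_goals grind

end
end

section
/- (i) For every odd integer d ≥ 5, with n = (d²+1)/2, the Tanner graph T(1+x, 1+x^d) has girth exactly 8. (ii) For d = 3 (so n = 5), the Tanner graph T(1+x, 1+x³) has girth exactly 6. (iii) For every even integer d ≥ 4, with n = d²/2, the Tanner graph T(1+x, 1+x^{d+1}) has girth exactly 8. (These are the Tanner graphs of the [[d²+1, 2, d]] and [[d², 2, d]] GB code families, so except for the [[10, 2, 3]] code they attain the maximum girth 8 possible for GB codes.) -/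
open Polynomial

noncomputable section

/-!
Every data vertex of `T(1 + x ^ k, 1 + x ^ l)` lies between exactly two check vertices, so the
Tanner graph is the barycentric subdivision of the circulant graph on `ℤ/n` with connection set
`{k, l}`, and its girth is twice the girth of the circulant graph. The latter contains the 4-cycle
`0, k, k + l, l`, and it has no triangle once the lattice of relations `i * k + j * l = 0` has no
nonzero vector of `ℓ¹`-norm at most `3`. For `(k, l) = (1, d)` with `d ^ 2 = -1`, every relation
has `n ∣ i ^ 2 + j ^ 2`; for `(k, l) = (1, d + 1)` with `d ∣ n`, every relation has `d ∣ i + j`.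
The circulant graph on `ℤ/5` with connection set `{1, 3}` is complete.
-/

section Subdivision

open SimpleGraph

variable {V : Type*} {H : SimpleGraph V}

/-- The barycentric subdivision of a graph: every edge `e` is replaced by a new vertex `Sum.inr e`
joined to the two endpoints of `e`. -/
def subdivision (H : SimpleGraph V) : SimpleGraph (V ⊕ H.edgeSet) where
  Adj
    | .inl v, .inr e => v ∈ e.1
    | .inr e, .inl v => v ∈ e.1
    | _, _ => False
  symm := ⟨by rintro (_ | _) (_ | _) h <;> exact h⟩
  loopless := ⟨by rintro (_ | _) h <;> exact h⟩

@[simp]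
lemma subdivision_adj_inl_inl {u v : V} : ¬ (subdivision H).Adj (.inl u) (.inl v) := id

@[simp]
lemma subdivision_adj_inr_inr {e f : H.edgeSet} : ¬ (subdivision H).Adj (.inr e) (.inr f) := id

@[simp]
lemma subdivision_adj_inl_inr {v : V} {e : H.edgeSet} :
    (subdivision H).Adj (.inl v) (.inr e) ↔ v ∈ e.1 := .rfl

@[simp]
lemma subdivision_adj_inr_inl {v : V} {e : H.edgeSet} :
    (subdivision H).Adj (.inr e) (.inl v) ↔ v ∈ e.1 := .rfl

/-- The walk in the subdivision that traverses both halves of every edge of a given walk. -/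
def subdivideWalk {u v : V} : H.Walk u v → (subdivision H).Walk (.inl u) (.inl v)
  | .nil => .nil
  | .cons (v := w) h p =>
    .cons (subdivision_adj_inl_inr (e := ⟨s(u, w), h⟩).2 (Sym2.mem_mk_left u w))
      (.cons (subdivision_adj_inr_inl.2 (Sym2.mem_mk_right u w)) (subdivideWalk p))

@[simp]
lemma length_subdivideWalk {u v : V} (p : H.Walk u v) :
    (subdivideWalk p).length = 2 * p.length := by
  induction p with
  | nil => rfl
  | cons h p ih => simp only [subdivideWalk, Walk.length_cons, ih]; ring

lemma mem_edges_subdivideWalk {u v : V} {p : H.Walk u v} {x : V} {e : H.edgeSet} :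
    s(.inl x, .inr e) ∈ (subdivideWalk p).edges ↔ e.1 ∈ p.edges ∧ x ∈ e.1 := by
  induction p with
  | nil => simp [subdivideWalk]
  | cons h p ih =>
    simp only [subdivideWalk, Walk.edges_cons, List.mem_cons, ih, Sym2.eq_iff, Sum.inl.injEq,
      Sum.inr.injEq, reduceCtorEq, Subtype.ext_iff]
    aesop

lemma isTrail_subdivideWalk {u v : V} {p : H.Walk u v} :
    (subdivideWalk p).IsTrail ↔ p.IsTrail := by
  induction p with
  | nil => simp [subdivideWalk]
  | @cons u v w h p ih =>
    have hne : u ≠ v := h.ne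
    rw [subdivideWalk, Walk.isTrail_cons, Walk.isTrail_cons, Walk.isTrail_cons, ih, Walk.edges_cons,
      List.mem_cons, Sym2.eq_swap (a := Sum.inr _), mem_edges_subdivideWalk,
      mem_edges_subdivideWalk]
    simp [hne]

/-- Being a trail rules out turning around at the midpoint of an edge. -/
lemma exists_subdivideWalk_eq {u v : V} {w : (subdivision H).Walk (.inl u) (.inl v)}
    (hw : w.IsTrail) : ∃ p : H.Walk u v, subdivideWalk p = w := by
  match w, hw with
  | .nil, _ => exact ⟨.nil, rfl⟩
  | .cons (v := .inr ⟨e, he⟩) hu (.cons (v := .inl x) hx w), hw =>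
    obtain ⟨p, rfl⟩ := exists_subdivideWalk_eq hw.of_cons.of_cons
    have hux : u ≠ x := by
      rintro rfl
      simp [Sym2.eq_swap] at hw
    obtain rfl : e = s(u, x) := (Sym2.mem_and_mem_iff hux).1 ⟨hu, hx⟩
    exact ⟨.cons he p, rfl⟩
termination_by w.length

lemma isCircuit_subdivideWalk {u : V} {p : H.Walk u u} :
    (subdivideWalk p).IsCircuit ↔ p.IsCircuit := by
  rw [Walk.isCircuit_def, Walk.isCircuit_def, isTrail_subdivideWalk]
  cases p <;> simp [subdivideWalk]

lemma exists_isCircuit_of_isCircuit_subdivision {v : V ⊕ H.edgeSet}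
    {w : (subdivision H).Walk v v} (hw : w.IsCircuit) :
    ∃ (u : V) (p : H.Walk u u), p.IsCircuit ∧ w.length = 2 * p.length := by
  classical
  match v, w, hw with
  | .inl u, w, hw =>
    obtain ⟨p, rfl⟩ := exists_subdivideWalk_eq hw.isTrail
    exact ⟨u, p, isCircuit_subdivideWalk.1 hw, length_subdivideWalk p⟩
  | .inr e, .cons (v := .inl u) h w, hw =>
    have hu : .inl u ∈ (Walk.cons h w).support := by simp
    obtain ⟨p, hp⟩ := exists_subdivideWalk_eq (hw.rotate hu).isTrail
    exact ⟨u, p, isCircuit_subdivideWalk.1 (hp ▸ hw.rotate hu), by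
      rw [← length_subdivideWalk, hp, Walk.length_rotate]⟩

theorem egirth_subdivision (H : SimpleGraph V) : (subdivision H).egirth = 2 * H.egirth := by
  apply le_antisymm
  · by_cases hH : H.IsAcyclic
    · simp [hH.egirth_eq_top]
    obtain ⟨u, p, hp, hlen⟩ := exists_egirth_eq_length.2 hH
    rw [hlen]
    exact_mod_cast length_subdivideWalk p ▸
      (isCircuit_subdivideWalk.2 hp.isCircuit).egirth_le_length
  · rw [le_egirth]
    intro v w hw
    obtain ⟨u, p, hp, hlen⟩ := exists_isCircuit_of_isCircuit_subdivision hw.isCircuit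
    rw [hlen, Nat.cast_mul]
    exact mul_le_mul_right hp.egirth_le_length 2

end Subdivision

section Circulant

open SimpleGraph

variable {V : Type*} {G : SimpleGraph V}

lemma four_le_egirth_of_cliqueFree_three (hG : G.CliqueFree 3) : 4 ≤ G.egirth := by
  classical
  rw [le_egirth]
  intro v w hw
  have hne : w.length ≠ 3 := fun h =>
    (is3Clique_iff_exists_cycle_length_three.2 ⟨v, w, hw, h⟩).elim hG
  have := hw.three_le_length
  exact_mod_cast (show 4 ≤ w.length by omega)

lemma egirth_le_four_of_adj {u v w x : V} (huv : G.Adj u v) (hvw : G.Adj v w) (hwx : G.Adj w x)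
    (hxu : G.Adj x u) (huw : u ≠ w) (hvx : v ≠ x) : G.egirth ≤ 4 := by
  have hcircuit : (Walk.cons huv (.cons hvw (.cons hwx (.cons hxu .nil)))).IsCircuit := by
    simp only [Walk.isCircuit_def, Walk.isTrail_cons, Walk.edges_cons, Walk.edges_nil,
      List.mem_cons, Sym2.eq_iff, ne_eq, reduceCtorEq, not_false_eq_true, Walk.IsTrail.nil]
    grind [huv.ne, hvw.ne, hwx.ne, hxu.ne]
  exact hcircuit.egirth_le_length

variable {A : Type*} [AddCommGroup A] {a b : A}

lemma circulantGraph_sub_adj {S : Set A} (ha : a ∈ S) (ha₀ : a ≠ 0) (u : A) :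
    (circulantGraph S).Adj (u - a) u := by
  simp [ha, ha₀]

/-- The lattice of relations `i • a + j • b = 0` between `a` and `b` has no nonzero vector of
`ℓ¹`-norm at most `m`. Equivalently, all closed walks of length at most `m` in the Cayley graph of
`a` and `b` lift to closed walks in the grid `ℤ × ℤ`. -/
def RelationFree (m : ℤ) (a b : A) : Prop :=
  ∀ i j : ℤ, i • a + j • b = 0 → |i| + |j| ≤ m → i = 0 ∧ j = 0

lemma RelationFree.mono {m m' : ℤ} (h : RelationFree m a b) (hm : m' ≤ m) : RelationFree m' a b :=
  fun i j hij hle => h i j hij (hle.trans hm)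

lemma RelationFree.left_ne_zero {m : ℤ} (h : RelationFree m a b) (hm : 1 ≤ m) : a ≠ 0 := by
  rintro rfl
  simpa using h 1 0 (by simp) (by simpa)

lemma RelationFree.right_ne_zero {m : ℤ} (h : RelationFree m a b) (hm : 1 ≤ m) : b ≠ 0 := by
  rintro rfl
  simpa using h 0 1 (by simp) (by simpa)

lemma RelationFree.ne {m : ℤ} (h : RelationFree m a b) (hm : 2 ≤ m) : a ≠ b := by
  rintro rfl
  simpa using h 1 (-1) (by simp) (by simpa)

lemma RelationFree.add_ne_zero {m : ℤ} (h : RelationFree m a b) (hm : 2 ≤ m) : a + b ≠ 0 := by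
  intro hab
  simpa using h 1 1 (by simpa) (by simpa)

lemma exists_sub_eq_of_circulantGraph_pair_adj {u v : A} (huv : (circulantGraph {a, b}).Adj u v) :
    ∃ i j : ℤ, |i| + |j| = 1 ∧ v - u = i • a + j • b := by
  rcases huv.2 with (h | h) | (h | h)
  · exact ⟨-1, 0, by simp, by simp [← h]⟩
  · exact ⟨0, -1, by simp, by simp [← Set.mem_singleton_iff.1 h]⟩
  · exact ⟨1, 0, by simp, by simp [← h]⟩
  · exact ⟨0, 1, by simp, by simp [← Set.mem_singleton_iff.1 h]⟩

lemma circulantGraph_pair_cliqueFree_three (h : RelationFree 3 a b) :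
    (circulantGraph {a, b}).CliqueFree 3 := by
  classical
  intro s hs
  obtain ⟨u, v, w, huv, huw, hvw, -⟩ := is3Clique_iff.1 hs
  obtain ⟨i₁, j₁, h₁, huv⟩ := exists_sub_eq_of_circulantGraph_pair_adj huv
  obtain ⟨i₂, j₂, h₂, hvw⟩ := exists_sub_eq_of_circulantGraph_pair_adj hvw
  obtain ⟨i₃, j₃, h₃, hwu⟩ := exists_sub_eq_of_circulantGraph_pair_adj huw.symm
  have hsum : (i₁ + i₂ + i₃) • a + (j₁ + j₂ + j₃) • b = 0 := by
    rw [add_zsmul, add_zsmul, add_zsmul, add_zsmul, ← sub_self u]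
    grind
  obtain ⟨hi, hj⟩ := h _ _ hsum (by grind)
  -- Three unit vectors cannot add up to zero: each changes the parity of the coordinate sum.
  grind

lemma egirth_circulantGraph_pair (h : RelationFree 3 a b) :
    (circulantGraph {a, b}).egirth = 4 := by
  refine le_antisymm ?_ <|
    four_le_egirth_of_cliqueFree_three (circulantGraph_pair_cliqueFree_three h)
  have ha (u : A) : (circulantGraph {a, b}).Adj (u - a) u :=
    circulantGraph_sub_adj (by simp) (h.left_ne_zero (by norm_num)) u
  have hb (u : A) : (circulantGraph {a, b}).Adj (u - b) u :=
    circulantGraph_sub_adj (by simp) (h.right_ne_zero (by norm_num)) u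
  exact egirth_le_four_of_adj (u := 0) (v := a) (w := a + b) (x := b)
    (by simpa using ha a) (by simpa using hb (a + b)) (by simpa using (ha (a + b)).symm)
    (by simpa using (hb b).symm) (h.add_ne_zero (by norm_num)).symm (h.ne (by norm_num))

/-- The edges of the Cayley graph of `a` and `b`, indexed by their heads: the two copies of `A`
stand for the edges in direction `a` and in direction `b`. -/
def circulantEdge (ha : a ≠ 0) (hb : b ≠ 0) : A ⊕ A → (circulantGraph {a, b}).edgeSet
  | .inl s => ⟨s(s - a, s), circulantGraph_sub_adj (by simp) ha s⟩
  | .inr s => ⟨s(s - b, s), circulantGraph_sub_adj (by simp) hb s⟩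

lemma circulantEdge_injective (h : RelationFree 2 a b) (ha : a ≠ 0) (hb : b ≠ 0) :
    Function.Injective (circulantEdge ha hb) := by
  have h2a : a + a ≠ 0 := fun h' => by simpa using h 2 0 (by simpa [two_zsmul]) (by simp)
  have h2b : b + b ≠ 0 := fun h' => by simpa using h 0 2 (by simpa [two_zsmul]) (by simp)
  have hab := h.ne le_rfl
  have hab' := h.add_ne_zero le_rfl
  rintro (s | s) (t | t) hst <;>
    simp only [circulantEdge, Subtype.ext_iff, Sym2.eq_iff, Sum.inl.injEq, Sum.inr.injEq,
      reduceCtorEq] at hst ⊢ <;> grind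

lemma circulantEdge_surjective (ha : a ≠ 0) (hb : b ≠ 0) :
    Function.Surjective (circulantEdge ha hb) := by
  rintro ⟨e, he⟩
  induction e with | _ u v
  rcases he.2 with (h | h) | (h | h) <;> cases h
  · exact ⟨.inl u, by simp [circulantEdge, Sym2.eq_swap]⟩
  · exact ⟨.inr u, by simp [circulantEdge, Sym2.eq_swap]⟩
  · exact ⟨.inl v, by simp [circulantEdge]⟩
  · exact ⟨.inr v, by simp [circulantEdge]⟩

end Circulant

section Tanner

variable {n : ℕ}

lemma coeffZ_add (u v : R2 n) (i : ZMod n) : coeffZ (u + v) i = coeffZ u i + coeffZ v i := by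
  unfold coeffZ repP
  split_ifs <;> simp

lemma coeffZ_xR_pow [NeZero n] (k : ℕ) (i : ZMod n) :
    coeffZ (xR n ^ k) i = if i = k then 1 else 0 := by
  have hn : n ≠ 0 := NeZero.ne n
  have hmonic : (X ^ n - 1 : (ZMod 2)[X]).Monic := monic_X_pow_sub_C 1 hn
  have hrep : repP (xR n ^ k) = X ^ (k % n) := by
    have hmk : xR n ^ k = AdjoinRoot.mk _ (X ^ (k % n)) := by
      rw [pow_eq_pow_mod k (xR_pow_n n), map_pow, AdjoinRoot.mk_X, xR]
    have hdeg : (X ^ n - 1 : (ZMod 2)[X]).degree = n := degree_X_pow_sub_C (NeZero.pos n) 1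
    rw [repP, dif_neg hn, hmk, AdjoinRoot.modByMonicHom_mk, modByMonic_eq_self_iff hmonic, hdeg,
      degree_X_pow]
    exact_mod_cast Nat.mod_lt k (NeZero.pos n)
  have hval : i.val = k % n ↔ i = k := by
    rw [← ZMod.val_natCast, (ZMod.val_injective n).eq_iff]
  rw [coeffZ, hrep, coeff_X_pow, if_congr hval rfl rfl]

lemma coeffZ_one_add_xR_pow [NeZero n] {k : ℕ} (hk : (k : ZMod n) ≠ 0) (i : ZMod n) :
    coeffZ (1 + xR n ^ k) i = 1 ↔ i = 0 ∨ i = k := by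
  rw [coeffZ_add, ← pow_zero (xR n), coeffZ_xR_pow, coeffZ_xR_pow, Nat.cast_zero]
  grind

open SimpleGraph

lemma tanner_adj_inl_inl {a b : R2 n} {t u : ZMod n} :
    ¬ (tanner n a b).Adj (.inl t) (.inl u) := by
  simp [tanner, trel]

lemma tanner_adj_inr_inr {a b : R2 n} {y z : ZMod n ⊕ ZMod n} :
    ¬ (tanner n a b).Adj (.inr y) (.inr z) := by
  simp [tanner, trel]

lemma tanner_adj_inl_inr_inl {a b : R2 n} {t s : ZMod n} :
    (tanner n a b).Adj (.inl t) (.inr (.inl s)) ↔ coeffZ a (s - t) = 1 := by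
  simp [tanner, trel, TV]

lemma tanner_adj_inl_inr_inr {a b : R2 n} {t s : ZMod n} :
    (tanner n a b).Adj (.inl t) (.inr (.inr s)) ↔ coeffZ b (s - t) = 1 := by
  simp [tanner, trel, TV]

lemma tanner_adj_iff_mem_circulantEdge [NeZero n] {k l : ℕ} (hk : (k : ZMod n) ≠ 0)
    (hl : (l : ZMod n) ≠ 0) {t : ZMod n} {y : ZMod n ⊕ ZMod n} :
    (tanner n (1 + xR n ^ k) (1 + xR n ^ l)).Adj (.inl t) (.inr y) ↔
      t ∈ (circulantEdge hk hl y).1 := by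
  rcases y with s | s
  · rw [tanner_adj_inl_inr_inl, coeffZ_one_add_xR_pow hk, circulantEdge, Sym2.mem_iff]
    grind
  · rw [tanner_adj_inl_inr_inr, coeffZ_one_add_xR_pow hl, circulantEdge, Sym2.mem_iff]
    grind

/-- The Tanner graph of two binomials is the subdivision of a circulant graph on the check
vertices: every data vertex lies between exactly two check vertices. -/
def tannerIsoSubdivision [NeZero n] {k l : ℕ} (h : RelationFree 2 (k : ZMod n) l) :
    tanner n (1 + xR n ^ k) (1 + xR n ^ l) ≃g
      subdivision (circulantGraph {(k : ZMod n), (l : ZMod n)}) :=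
  have hk : (k : ZMod n) ≠ 0 := h.left_ne_zero one_le_two
  have hl : (l : ZMod n) ≠ 0 := h.right_ne_zero one_le_two
  { toEquiv := (Equiv.refl (ZMod n)).sumCongr <| .ofBijective (circulantEdge hk hl)
      ⟨circulantEdge_injective h hk hl, circulantEdge_surjective hk hl⟩
    map_rel_iff' := by
      rintro (t | y) (u | z)
      · exact iff_of_false subdivision_adj_inl_inl tanner_adj_inl_inl
      · exact (tanner_adj_iff_mem_circulantEdge hk hl).symm
      · exact (tanner_adj_iff_mem_circulantEdge hk hl).symm.trans (adj_comm ..)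
      · exact iff_of_false subdivision_adj_inr_inr tanner_adj_inr_inr }

theorem egirth_tanner_eq_two_mul [NeZero n] {k l : ℕ} (h : RelationFree 2 (k : ZMod n) l) :
    (tanner n (1 + xR n ^ k) (1 + xR n ^ l)).egirth =
      2 * (circulantGraph {(k : ZMod n), (l : ZMod n)}).egirth := by
  rw [(tannerIsoSubdivision h).egirth_eq, egirth_subdivision]

theorem egirth_tanner_eq_eight [NeZero n] {k l : ℕ} (h : RelationFree 3 (k : ZMod n) l) :
    (tanner n (1 + xR n ^ k) (1 + xR n ^ l)).egirth = 8 := by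
  rw [egirth_tanner_eq_two_mul (h.mono (by norm_num)), egirth_circulantGraph_pair h]
  norm_num

end Tanner

section Families

variable {n d : ℕ} {m : ℤ}

lemma relationFree_one_natCast_iff :
    RelationFree m (1 : ZMod n) d ↔
      ∀ i j : ℤ, (n : ℤ) ∣ i + j * d → |i| + |j| ≤ m → i = 0 ∧ j = 0 := by
  have hdvd (i j : ℤ) : i • (1 : ZMod n) + j • (d : ZMod n) = 0 ↔ (n : ℤ) ∣ i + j * d := by
    rw [← ZMod.intCast_zmod_eq_zero_iff_dvd]
    simp
  simp only [RelationFree, hdvd]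

/-- As `d ^ 2 = -1` modulo `n`, the norm `i ^ 2 + j ^ 2` of a relation is a multiple of `n`. -/
lemma relationFree_of_dvd_sq_add_one (hd : n ∣ d ^ 2 + 1) (hm : m ^ 2 < n) :
    RelationFree m (1 : ZMod n) d := by
  rw [relationFree_one_natCast_iff]
  intro i j hij hle
  have hd' : (n : ℤ) ∣ d ^ 2 + 1 := mod_cast hd
  have hdvd : (n : ℤ) ∣ i ^ 2 + j ^ 2 := by
    have := dvd_add (hij.mul_right (i - j * d)) (hd'.mul_left (j ^ 2))
    rwa [show (i + j * d) * (i - j * d) + j ^ 2 * (d ^ 2 + 1) = i ^ 2 + j ^ 2 by ring] at this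
  have hlt : i ^ 2 + j ^ 2 < n := calc
    i ^ 2 + j ^ 2 = |i| ^ 2 + |j| ^ 2 := by rw [sq_abs, sq_abs]
    _ ≤ (|i| + |j|) ^ 2 := by nlinarith [abs_nonneg i, abs_nonneg j]
    _ ≤ m ^ 2 := by gcongr
    _ < n := hm
  have hzero : i ^ 2 + j ^ 2 = 0 := Int.eq_zero_of_dvd_of_nonneg_of_lt (by positivity) hlt hdvd
  constructor <;> nlinarith

/-- A relation `i + j * (d + 1) = 0` modulo `n` forces `d ∣ i + j`, hence `i = -j`, and then
`n / d` divides `j`. -/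
lemma relationFree_succ_of_dvd (hd : d ∣ n) (hmd : m < d) (hmn : m * d < 2 * n) :
    RelationFree m (1 : ZMod n) (d + 1 : ℕ) := by
  rw [relationFree_one_natCast_iff]
  obtain ⟨c, rfl⟩ := hd
  push_cast at hmn ⊢
  intro i j hij hle
  have hd_pos : (0 : ℤ) < d := by linarith [abs_nonneg i, abs_nonneg j]
  have hadd : i + j = 0 := by
    have hdvd : (d : ℤ) ∣ i + j := by
      have := dvd_sub (dvd_of_mul_right_dvd hij) (dvd_mul_left (d : ℤ) j)
      rwa [show i + j * (d + 1) - j * d = i + j by ring] at this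
    exact Int.eq_zero_of_abs_lt_dvd hdvd (by linarith [abs_add_le i j])
  obtain rfl : i = -j := by linarith
  have hj : j = 0 := by
    have hdvd : (c : ℤ) ∣ j := by
      rw [show -j + j * (d + 1) = d * j by ring] at hij
      exact Int.dvd_of_mul_dvd_mul_left hd_pos.ne' hij
    have hmc : m < 2 * c := by nlinarith
    rw [abs_neg] at hle
    exact Int.eq_zero_of_abs_lt_dvd hdvd (by linarith)
  simp [hj]

theorem egirth_tanner_eq_eight_of_dvd_sq_add_one (hd : n ∣ d ^ 2 + 1) (hn : 9 < n) :
    (tanner n (1 + xR n) (1 + xR n ^ d)).egirth = 8 := by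
  have : NeZero n := ⟨by omega⟩
  have h : RelationFree 3 ((1 : ℕ) : ZMod n) d := by
    simpa using relationFree_of_dvd_sq_add_one hd (m := 3) (by norm_num; exact_mod_cast hn)
  simpa using egirth_tanner_eq_eight h

theorem egirth_tanner_eq_eight_of_dvd (hd : 4 ≤ d) (hdn : d ∣ n) (hn : 2 * d ≤ n) :
    (tanner n (1 + xR n) (1 + xR n ^ (d + 1))).egirth = 8 := by
  have : NeZero n := ⟨by omega⟩
  have h : RelationFree 3 ((1 : ℕ) : ZMod n) (d + 1 : ℕ) := by
    simpa using relationFree_succ_of_dvd (m := 3) hdn (by omega) (by omega)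
  simpa using egirth_tanner_eq_eight h

open SimpleGraph in
theorem egirth_tanner_five_three : (tanner 5 (1 + xR 5) (1 + xR 5 ^ 3)).egirth = 6 := by
  have h : RelationFree 2 ((1 : ℕ) : ZMod 5) (3 : ℕ) := by
    simpa using relationFree_of_dvd_sq_add_one (n := 5) (d := 3) (m := 2)
      (by norm_num) (by norm_num)
  have hK₅ : circulantGraph {((1 : ℕ) : ZMod 5), ((3 : ℕ) : ZMod 5)} = ⊤ := by
    ext u v
    revert u v
    decide
  have hgirth := egirth_tanner_eq_two_mul h
  rw [hK₅, egirth_top (by norm_num), pow_one] at hgirth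
  rw [hgirth]
  norm_num

end Families

theorem stmt_19_general :
    (∀ d n : ℕ, n ∣ d ^ 2 + 1 → 9 < n →
      (tanner n (1 + xR n) (1 + xR n ^ d)).egirth = 8) ∧
    (tanner 5 (1 + xR 5) (1 + xR 5 ^ 3)).egirth = 6 ∧
    (∀ d n : ℕ, 4 ≤ d → d ∣ n → 2 * d ≤ n →
      (tanner n (1 + xR n) (1 + xR n ^ (d + 1))).egirth = 8) :=
  ⟨fun _ _ => egirth_tanner_eq_eight_of_dvd_sq_add_one, egirth_tanner_five_three,
    fun _ _ => egirth_tanner_eq_eight_of_dvd⟩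

/-- (i) For every odd `d ≥ 5` with `2n = d²+1`, the Tanner graph
`T(1+x, 1+x^d)` has girth exactly `8`; (ii) for `d = 3` (so `n = 5`), `T(1+x, 1+x³)` has
girth exactly `6`; (iii) for every even `d ≥ 4` with `2n = d²`, `T(1+x, 1+x^{d+1})` has
girth exactly `8`. -/
theorem stmt_19 :
    (∀ d n : ℕ, Odd d → 5 ≤ d → 2 * n = d ^ 2 + 1 →
      (tanner n (1 + xR n) (1 + xR n ^ d)).egirth = 8) ∧
    (tanner 5 (1 + xR 5) (1 + xR 5 ^ 3)).egirth = 6 ∧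
    (∀ d n : ℕ, Even d → 4 ≤ d → 2 * n = d ^ 2 →
      (tanner n (1 + xR n) (1 + xR n ^ (d + 1))).egirth = 8) :=
  ⟨fun d n _ hd hn => stmt_19_general.1 d n ⟨2, by omega⟩ (by nlinarith), stmt_19_general.2.1,
    fun d n ⟨c, hc⟩ hd hn => stmt_19_general.2.2 d n hd ⟨c, by subst hc; nlinarith⟩ (by nlinarith)⟩

end
end
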